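/- arXiv:1805.03624 — 10 statements merged into one kernel-verified Lean document; each statement's English description precedes it below -/
import Mathlib

section
/- For every natural number X there is exactly one sequence (b_{n+1})_{n≥0} of natural numbers, all but finitely many equal to zero, such that X = Σ_{n≥0} b_{n+1} q_n, where 0 ≤ b_1 < a_1, 0 ≤ b_{n+1} ≤ a_{n+1} for all n ≥ 1, and b_n = 0 whenever b_{n+1} = a_{n+1}. (Existence and uniqueness of the α-Ostrowski representation.) -/
/-!
The Ostrowski digits of `X` are its greedy digits in the numeration system `q 0, q 1, …`: a digit
sequence `d` is greedy when `∑ i < n, d i * q i < q n` for all `n`, that is, when each partial sum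
is the remainder of the next one modulo `q n`. For any nondecreasing unbounded `q` with `q 0 = 1`,
repeated division with remainder shows that greedy expansions exist and are unique.

When `q` satisfies the recurrence of convergent denominators, greediness is equivalent to the
Ostrowski digit conditions. If the top digit `d (n + 1)` equals `a (n + 2)`, then
`q (n + 2) = a (n + 2) * q (n + 1) + q n` leaves room for a sum below `q n`, which is to say
`d n = 0`; if it is smaller, there is room for one more copy of `q (n + 1)`.

For irrational `α` every complete quotient is irrational, so `a 1, a 2, …` are positive and `q` is
nondecreasing and unbounded.
-/

/-- `a` is the sequence of partial quotients of the continued fraction expansion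
`[a 0; a 1, a 2, …]` of `α`: there is a sequence `θ` of complete quotients with
`θ 0 = α`, `a n = ⌊θ n⌋` and `θ (n+1) = 1/(θ n - ⌊θ n⌋)`. -/
def IsCFExpansion (α : ℝ) (a : ℕ → ℕ) : Prop :=
  ∃ θ : ℕ → ℝ, θ 0 = α ∧
    ∀ n : ℕ, (a n : ℤ) = ⌊θ n⌋ ∧ θ (n + 1) = 1 / (θ n - (⌊θ n⌋ : ℝ))

/-- `p n / q n` are the convergents of the continued fraction with partial quotients `a`:
`p₋₁ = 1, q₋₁ = 0, p₀ = a₀, q₀ = 1`, and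
`pₙ = aₙ pₙ₋₁ + pₙ₋₂`, `qₙ = aₙ qₙ₋₁ + qₙ₋₂` for `n ≥ 1`. -/
def IsConvergents (a p q : ℕ → ℕ) : Prop :=
  p 0 = a 0 ∧ q 0 = 1 ∧ p 1 = a 1 * a 0 + 1 ∧ q 1 = a 1 ∧
  (∀ n : ℕ, p (n + 2) = a (n + 2) * p (n + 1) + p n) ∧
  (∀ n : ℕ, q (n + 2) = a (n + 2) * q (n + 1) + q n)

/-- `d` is the sequence of Ostrowski digits of `X` in base the continued fraction
with partial quotients `a` and convergent denominators `q`: `d n` is the digit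
`b_{n+1}` multiplying `q n`, the digits are eventually zero,
`X = Σ_{n} d n * q n`, `d 0 < a 1`, `d n ≤ a (n+1)` for `n ≥ 1`, and
`d n = 0` whenever `d (n+1) = a (n+2)`. -/
def IsOstrowskiRep (a q : ℕ → ℕ) (X : ℕ) (d : ℕ → ℕ) : Prop :=
  d 0 < a 1 ∧ (∀ n : ℕ, d (n + 1) ≤ a (n + 2)) ∧
  (∀ n : ℕ, d (n + 1) = a (n + 2) → d n = 0) ∧
  ∃ N : ℕ, (∀ n : ℕ, N ≤ n → d n = 0) ∧ X = ∑ n ∈ Finset.range N, d n * q n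

section GreedyExpansion

/-- Greediness of a digit sequence `d` in the numeration system with place values `q`: the digits
below place `n` contribute less than one unit of that place. This is the general notion of
expansion of which Ostrowski representations are an instance. -/
def IsGreedy (q d : ℕ → ℕ) : Prop :=
  ∀ n, ∑ i ∈ Finset.range n, d i * q i < q n

/-- `d` is an eventually zero sequence of digits of `X` in the numeration system with place
values `q`. As in `IsOstrowskiRep`, the sum is taken up to a bound beyond which the digits
vanish. -/
def IsExpansion (q : ℕ → ℕ) (X : ℕ) (d : ℕ → ℕ) : Prop :=
  ∃ N : ℕ, (∀ n : ℕ, N ≤ n → d n = 0) ∧ X = ∑ n ∈ Finset.range N, d n * q n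

variable {q d e : ℕ → ℕ} {X : ℕ}

theorem IsExpansion.eventually_sum_eq (h : IsExpansion q X d) :
    ∀ᶠ n in Filter.atTop, ∑ i ∈ Finset.range n, d i * q i = X := by
  obtain ⟨N, hzero, rfl⟩ := h
  filter_upwards [Filter.eventually_ge_atTop N] with n hn
  exact Finset.eventually_constant_sum (fun i hi ↦ by rw [hzero i hi, zero_mul]) hn

theorem IsGreedy.sum_div (hd : IsGreedy q d) (n : ℕ) :
    (∑ i ∈ Finset.range (n + 1), d i * q i) / q n = d n := by
  rw [Finset.sum_range_succ, Nat.add_mul_div_right _ _ (Nat.zero_lt_of_lt (hd n)),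
    Nat.div_eq_of_lt (hd n), zero_add]

theorem IsGreedy.sum_mod (hd : IsGreedy q d) (n : ℕ) :
    (∑ i ∈ Finset.range (n + 1), d i * q i) % q n = ∑ i ∈ Finset.range n, d i * q i := by
  rw [Finset.sum_range_succ, Nat.add_mul_mod_self_right, Nat.mod_eq_of_lt (hd n)]

theorem IsGreedy.eq_of_sum_eq (hd : IsGreedy q d) (he : IsGreedy q e) {n : ℕ}
    (h : ∑ i ∈ Finset.range n, d i * q i = ∑ i ∈ Finset.range n, e i * q i) :
    ∀ i < n, d i = e i := by
  induction n with
  | zero => simp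
  | succ n ih =>
    have hlast : d n = e n := by rw [← hd.sum_div, h, he.sum_div]
    have hlower : ∑ i ∈ Finset.range n, d i * q i = ∑ i ∈ Finset.range n, e i * q i := by
      rw [← hd.sum_mod, h, he.sum_mod]
    exact Nat.forall_lt_succ_right.2 ⟨ih hlower, hlast⟩

theorem IsGreedy.eq_of_isExpansion (hd : IsGreedy q d) (he : IsGreedy q e)
    (hdX : IsExpansion q X d) (heX : IsExpansion q X e) : d = e := by
  funext i
  obtain ⟨n, hdn, hen, hi⟩ :=
    (hdX.eventually_sum_eq.and
      (heX.eventually_sum_eq.and (Filter.eventually_gt_atTop i))).exists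
  exact hd.eq_of_sum_eq he (hdn.trans hen.symm) i hi

theorem sum_range_update_mul_of_le {m n : ℕ} (h : m ≤ n) (c : ℕ) :
    ∑ i ∈ Finset.range m, Function.update d n c i * q i = ∑ i ∈ Finset.range m, d i * q i := by
  refine Finset.sum_congr rfl fun i hi ↦ ?_
  rw [Function.update_of_ne ((Finset.mem_range.1 hi).trans_le h).ne]

theorem exists_isGreedy_sum_eq (h0 : q 0 = 1) (hmono : Monotone q) {n : ℕ} (hX : X < q n) :
    ∃ d, IsGreedy q d ∧ (∀ i, n ≤ i → d i = 0) ∧ X = ∑ i ∈ Finset.range n, d i * q i := by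
  have hpos (m : ℕ) : 0 < q m := h0.symm.trans_le (hmono m.zero_le)
  induction n generalizing X with
  | zero => exact ⟨0, fun m ↦ by simpa using hpos m, fun _ _ ↦ rfl, by simpa [h0] using hX⟩
  | succ n ih =>
    obtain ⟨d, hgreedy, hzero, hsum⟩ := ih (Nat.mod_lt X (hpos n))
    let e := Function.update d n (X / q n)
    have he_self : e n = X / q n := Function.update_self ..
    have he_lower {m : ℕ} (hm : m ≤ n) :
        ∑ i ∈ Finset.range m, e i * q i = ∑ i ∈ Finset.range m, d i * q i :=
      sum_range_update_mul_of_le hm _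
    have he_zero (i : ℕ) (hi : n + 1 ≤ i) : e i = 0 := by
      have hni : n < i := hi
      exact (Function.update_of_ne hni.ne' _ _).trans (hzero i hni.le)
    have he_sum : X = ∑ i ∈ Finset.range (n + 1), e i * q i := by
      rw [Finset.sum_range_succ, he_lower le_rfl, ← hsum, he_self, Nat.mod_add_div']
    refine ⟨e, fun m ↦ ?_, he_zero, he_sum⟩
    rcases le_or_gt m n with hm | hm
    · rw [he_lower hm]
      exact hgreedy m
    · calc ∑ i ∈ Finset.range m, e i * q i
          = X := by
            rw [he_sum]
            exact Finset.eventually_constant_sum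
              (fun i hi ↦ by rw [he_zero i hi, zero_mul]) hm
        _ < q (n + 1) := hX
        _ ≤ q m := hmono hm

theorem existsUnique_isGreedy_isExpansion (h0 : q 0 = 1) (hmono : Monotone q)
    (hX : ∃ n, X < q n) : ∃! d, IsGreedy q d ∧ IsExpansion q X d := by
  obtain ⟨n, hn⟩ := hX
  obtain ⟨d, hgreedy, hexp⟩ := exists_isGreedy_sum_eq h0 hmono hn
  exact ⟨d, ⟨hgreedy, n, hexp⟩, fun _ he ↦ he.1.eq_of_isExpansion hgreedy he.2 ⟨n, hexp⟩⟩

end GreedyExpansion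

namespace IsConvergents

variable {a p q : ℕ → ℕ}

theorem denom_zero (h : IsConvergents a p q) : q 0 = 1 := h.2.1

theorem denom_one (h : IsConvergents a p q) : q 1 = a 1 := h.2.2.2.1

theorem denom_add_two (h : IsConvergents a p q) (n : ℕ) :
    q (n + 2) = a (n + 2) * q (n + 1) + q n := h.2.2.2.2.2 n

theorem denom_pos (h : IsConvergents a p q) (ha : ∀ n, 0 < a (n + 1)) : ∀ n, 0 < q n
  | 0 => by simp [h.denom_zero]
  | 1 => by simpa only [h.denom_one] using ha 0
  | n + 2 => by
    rw [h.denom_add_two]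
    exact Nat.add_pos_right _ (h.denom_pos ha n)

theorem denom_succ_strictMono (h : IsConvergents a p q) (ha : ∀ n, 0 < a (n + 1)) :
    StrictMono fun n ↦ q (n + 1) := by
  refine strictMono_nat_of_lt_succ fun n ↦ ?_
  calc q (n + 1)
      ≤ a (n + 2) * q (n + 1) := Nat.le_mul_of_pos_left _ (ha (n + 1))
    _ < a (n + 2) * q (n + 1) + q n := Nat.lt_add_of_pos_right (h.denom_pos ha n)
    _ = q (n + 2) := (h.denom_add_two n).symm

theorem denom_monotone (h : IsConvergents a p q) (ha : ∀ n, 0 < a (n + 1)) : Monotone q := by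
  refine monotone_nat_of_le_succ fun n ↦ ?_
  cases n with
  | zero => exact h.denom_zero.trans_le (h.denom_pos ha 1)
  | succ n => exact (h.denom_succ_strictMono ha n.lt_succ_self).le

end IsConvergents

section DigitConditions

/-- The digit conditions in the definition of an Ostrowski representation, separated from the
number being represented, so that they can be compared with greediness. -/
structure IsOstrowskiDigits (a d : ℕ → ℕ) : Prop where
  zero_lt : d 0 < a 1
  succ_le (n : ℕ) : d (n + 1) ≤ a (n + 2)
  eq_zero_of_succ_eq (n : ℕ) : d (n + 1) = a (n + 2) → d n = 0

variable {a p q d : ℕ → ℕ} {X : ℕ}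

theorem isOstrowskiRep_iff :
    IsOstrowskiRep a q X d ↔ IsOstrowskiDigits a d ∧ IsExpansion q X d :=
  ⟨fun ⟨h0, hle, hzero, hX⟩ ↦ ⟨⟨h0, hle, hzero⟩, hX⟩,
    fun ⟨⟨h0, hle, hzero⟩, hX⟩ ↦ ⟨h0, hle, hzero, hX⟩⟩

theorem IsOstrowskiDigits.isGreedy (hd : IsOstrowskiDigits a d) (hq : IsConvergents a p q) :
    IsGreedy q d
  | 0 => by simp [hq.denom_zero]
  | 1 => by simpa [hq.denom_zero, hq.denom_one] using hd.zero_lt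
  | n + 2 => by
    rw [Finset.sum_range_succ, hq.denom_add_two]
    rcases (hd.succ_le n).eq_or_lt with hmax | hlt
    · have hsum : ∑ i ∈ Finset.range (n + 1), d i * q i < q n := by
        rw [Finset.sum_range_succ, hd.eq_zero_of_succ_eq n hmax, zero_mul, add_zero]
        exact hd.isGreedy hq n
      rw [hmax]
      omega
    · have hsum := hd.isGreedy hq (n + 1)
      have hroom : (d (n + 1) + 1) * q (n + 1) ≤ a (n + 2) * q (n + 1) :=
        Nat.mul_le_mul_right _ hlt
      rw [Nat.succ_mul] at hroom
      omega

theorem IsGreedy.isOstrowskiDigits (hd : IsGreedy q d) (hq : IsConvergents a p q)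
    (ha : ∀ n, 0 < a (n + 1)) : IsOstrowskiDigits a d where
  zero_lt := by simpa [hq.denom_zero, hq.denom_one] using hd 1
  succ_le n := by
    have hlt : d (n + 1) * q (n + 1) < (a (n + 2) + 1) * q (n + 1) :=
      calc d (n + 1) * q (n + 1)
          ≤ ∑ i ∈ Finset.range (n + 2), d i * q i := by
            rw [Finset.sum_range_succ]
            exact Nat.le_add_left _ _
        _ < q (n + 2) := hd (n + 2)
        _ = a (n + 2) * q (n + 1) + q n := hq.denom_add_two n
        _ ≤ a (n + 2) * q (n + 1) + q (n + 1) :=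
            Nat.add_le_add_left (hq.denom_monotone ha n.le_succ) _
        _ = (a (n + 2) + 1) * q (n + 1) := (Nat.succ_mul _ _).symm
    exact Nat.le_of_lt_succ (Nat.lt_of_mul_lt_mul_right hlt)
  eq_zero_of_succ_eq n hmax := by
    have hsum := hd (n + 2)
    rw [Finset.sum_range_succ, Finset.sum_range_succ, hq.denom_add_two, hmax] at hsum
    have hlt : d n * q n < 1 * q n := by omega
    exact Nat.lt_one_iff.1 (Nat.lt_of_mul_lt_mul_right hlt)

theorem isOstrowskiDigits_iff_isGreedy (hq : IsConvergents a p q) (ha : ∀ n, 0 < a (n + 1)) :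
    IsOstrowskiDigits a d ↔ IsGreedy q d :=
  ⟨fun hd ↦ hd.isGreedy hq, fun hd ↦ hd.isOstrowskiDigits hq ha⟩

end DigitConditions

theorem one_lt_one_div_sub_floor {x : ℝ} (hx : Irrational x) : 1 < 1 / (x - ⌊x⌋) :=
  one_lt_one_div (sub_pos.2 ((Int.floor_le x).lt_of_ne (hx.ne_int _).symm))
    (sub_lt_iff_lt_add'.2 (Int.lt_floor_add_one x))

theorem irrational_one_div_sub_floor {x : ℝ} (hx : Irrational x) :
    Irrational (1 / (x - ⌊x⌋)) := by
  rw [one_div]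
  exact (hx.sub_intCast _).inv

theorem IsCFExpansion.partialQuotient_succ_pos {α : ℝ} {a : ℕ → ℕ} (ha : IsCFExpansion α a)
    (hα : Irrational α) (n : ℕ) : 0 < a (n + 1) := by
  obtain ⟨θ, hzero, hθ⟩ := ha
  have hirr (n : ℕ) : Irrational (θ n) := by
    induction n with
    | zero => rwa [hzero]
    | succ n ih => exact (hθ n).2 ▸ irrational_one_div_sub_floor ih
  have hone : 1 ≤ θ (n + 1) := (hθ n).2 ▸ (one_lt_one_div_sub_floor (hirr n)).le
  rw [← Int.natCast_pos, (hθ (n + 1)).1]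
  exact Int.floor_pos.2 hone

theorem ostrowski_representation_existsUnique_general {a p q : ℕ → ℕ}
    (ha : ∀ n, 0 < a (n + 1)) (hpq : IsConvergents a p q) (X : ℕ) :
    ∃! d : ℕ → ℕ, IsOstrowskiRep a q X d := by
  have hX : ∃ n, X < q n :=
    ⟨X + 2, X.lt_succ_self.trans_le (hpq.denom_succ_strictMono ha).le_apply⟩
  simpa only [isOstrowskiRep_iff, isOstrowskiDigits_iff_isGreedy hpq ha] using
    existsUnique_isGreedy_isExpansion hpq.denom_zero (hpq.denom_monotone ha) hX

/-- **Existence and uniqueness of the α-Ostrowski representation.**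
For every natural number `X` there is exactly one (eventually zero) sequence of
digits `d` with `X = Σ_n d n * q n`, `d 0 < a 1`, `d (n+1) ≤ a (n+2)` and
`d n = 0` whenever `d (n+1) = a (n+2)`. -/
theorem ostrowski_representation_existsUnique
    (α : ℝ) (hα : 0 < α) (hirr : Irrational α)
    (a : ℕ → ℕ) (ha : IsCFExpansion α a)
    (p q : ℕ → ℕ) (hpq : IsConvergents a p q)
    (X : ℕ) :
    ∃! d : ℕ → ℕ, IsOstrowskiRep a q X d := by
  exact ostrowski_representation_existsUnique_general (ha.partialQuotient_succ_pos hirr) hpq X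
end

section
/- For every n ∈ ℕ, the series a_{n+2} β_{n+1} + a_{n+4} β_{n+3} + a_{n+6} β_{n+5} + ⋯ (i.e., Σ_{j≥0} a_{n+2j+2} β_{n+2j+1}) converges and its sum equals −β_n. -/
/-- The `n`-th difference of `α`: `βₙ = qₙ α − pₙ`. -/
noncomputable def cfBeta (α : ℝ) (p q : ℕ → ℕ) (n : ℕ) : ℝ :=
  (q n : ℝ) * α - (p n : ℝ)

theorem hasSum_succ_sub_of_summable {G : Type*} [AddCommGroup G] [TopologicalSpace G]
    [IsTopologicalAddGroup G] {f : ℕ → G} (hf : Summable f) :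
    HasSum (fun n ↦ f (n + 1) - f n) (-f 0) := by
  obtain ⟨s, hs⟩ := hf
  simpa using ((hasSum_nat_add_iff' 1).2 hs).sub hs

/-- `θ` is the sequence of complete quotients in the infinite continued fraction expansion
`[a 0; a 1, a 2, …]` of `α`, so that `α = [a 0; a 1, …, a (n-1), θ n]` for all `n`. It is
characterized here by `θ n = a n + 1 / θ (n+1)` with `θ (n+1) > 1`, which avoids floors. -/
structure IsCompleteQuotients (α : ℝ) (a : ℕ → ℕ) (θ : ℕ → ℝ) : Prop where
  zero : θ 0 = α
  one_lt_succ (n : ℕ) : 1 < θ (n + 1)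
  eq_add_inv (n : ℕ) : θ n = a n + (θ (n + 1))⁻¹

theorem IsCFExpansion.exists_isCompleteQuotients {α : ℝ} {a : ℕ → ℕ} (ha : IsCFExpansion α a)
    (hα : Irrational α) : ∃ θ, IsCompleteQuotients α a θ := by
  obtain ⟨θ, hzero, hθ⟩ := ha
  have hsucc (n : ℕ) : θ (n + 1) = (Int.fract (θ n))⁻¹ := by
    rw [(hθ n).2, one_div, Int.self_sub_floor]
  have hirr (n : ℕ) : Irrational (θ n) := by
    induction n with
    | zero => rwa [hzero]
    | succ n ih =>
      rw [hsucc]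
      exact (ih.sub_intCast _).inv
  have hfloor (n : ℕ) : (a n : ℝ) = ⌊θ n⌋ := mod_cast (hθ n).1
  refine ⟨θ, hzero, fun n ↦ ?_, fun n ↦ ?_⟩
  · rw [hsucc]
    exact (one_lt_inv₀ (Int.fract_pos.2 ((hirr n).ne_int _))).2 (Int.fract_lt_one _)
  · rw [hsucc, inv_inv, hfloor, Int.floor_add_fract]

namespace IsCompleteQuotients

variable {α : ℝ} {a : ℕ → ℕ} {θ : ℕ → ℝ}

theorem pos_succ (h : IsCompleteQuotients α a θ) (n : ℕ) : 0 < θ (n + 1) :=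
  zero_lt_one.trans (h.one_lt_succ n)

theorem mul_succ (h : IsCompleteQuotients α a θ) (n : ℕ) :
    θ n * θ (n + 1) = a n * θ (n + 1) + 1 := by
  rw [h.eq_add_inv n, add_mul, inv_mul_cancel₀ (h.pos_succ n).ne']

theorem one_le_partialQuotient_succ (h : IsCompleteQuotients α a θ) (n : ℕ) : 1 ≤ a (n + 1) := by
  have hinv : (θ (n + 2))⁻¹ < 1 := inv_lt_one_of_one_lt₀ (h.one_lt_succ (n + 1))
  have hpos : (0 : ℝ) < a (n + 1) := by
    linarith [h.one_lt_succ n, h.eq_add_inv (n + 1)]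
  exact mod_cast hpos

theorem two_lt_mul_succ (h : IsCompleteQuotients α a θ) (n : ℕ) :
    2 < θ (n + 1) * θ (n + 2) := by
  have ha : (1 : ℝ) ≤ a (n + 1) := mod_cast h.one_le_partialQuotient_succ n
  calc
    (2 : ℝ) < θ (n + 2) + 1 := by linarith [h.one_lt_succ (n + 1)]
    _ ≤ a (n + 1) * θ (n + 2) + 1 := by
      gcongr
      exact le_mul_of_one_le_left (h.pos_succ (n + 1)).le ha
    _ = θ (n + 1) * θ (n + 2) := (h.mul_succ (n + 1)).symm

end IsCompleteQuotients

theorem cfBeta_add_two (α : ℝ) {a p q : ℕ → ℕ} (hpq : IsConvergents a p q) (n : ℕ) :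
    cfBeta α p q (n + 2) = a (n + 2) * cfBeta α p q (n + 1) + cfBeta α p q n := by
  obtain ⟨-, -, -, -, hp, hq⟩ := hpq
  simp only [cfBeta, hp n, hq n]
  push_cast
  ring

section Differences

variable {α : ℝ} {a p q : ℕ → ℕ} {θ : ℕ → ℝ}

theorem cfBeta_eq_neg_mul_succ (hpq : IsConvergents a p q) (hθ : IsCompleteQuotients α a θ)
    (n : ℕ) : cfBeta α p q n = -(θ (n + 2) * cfBeta α p q (n + 1)) := by
  induction n with
  | zero =>
    obtain ⟨hp₀, hq₀, hp₁, hq₁, -, -⟩ := hpq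
    have hmul₀ : α * θ 1 = a 0 * θ 1 + 1 := hθ.zero ▸ hθ.mul_succ 0
    have hmul₁ : θ 1 * θ 2 = a 1 * θ 2 + 1 := hθ.mul_succ 1
    simp only [cfBeta, zero_add, hp₀, hq₀, hp₁, hq₁]
    push_cast
    linear_combination (a 0 - α) * hmul₁ + θ 2 * hmul₀
  | succ n ih =>
    have hmul : θ (n + 2) * θ (n + 3) = a (n + 2) * θ (n + 3) + 1 := hθ.mul_succ (n + 2)
    linear_combination
      -cfBeta α p q (n + 1) * hmul + θ (n + 3) * cfBeta_add_two α hpq n + θ (n + 3) * ih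

theorem cfBeta_eq_mul_add_two (hpq : IsConvergents a p q) (hθ : IsCompleteQuotients α a θ)
    (n : ℕ) : cfBeta α p q n = θ (n + 2) * θ (n + 3) * cfBeta α p q (n + 2) := by
  rw [cfBeta_eq_neg_mul_succ hpq hθ n, cfBeta_eq_neg_mul_succ hpq hθ (n + 1)]
  ring

theorem abs_cfBeta_add_two_le (hpq : IsConvergents a p q) (hθ : IsCompleteQuotients α a θ)
    (n : ℕ) : |cfBeta α p q (n + 2)| ≤ 1 / 2 * |cfBeta α p q n| := by
  have hdouble : 2 * |cfBeta α p q (n + 2)| ≤ |cfBeta α p q n| := by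
    have htwo : 2 < θ (n + 2) * θ (n + 3) := hθ.two_lt_mul_succ (n + 1)
    rw [cfBeta_eq_mul_add_two hpq hθ n, abs_mul, abs_of_pos (zero_lt_two.trans htwo)]
    gcongr
  linarith

theorem summable_cfBeta_add_two_mul (hpq : IsConvergents a p q)
    (hθ : IsCompleteQuotients α a θ) (n : ℕ) :
    Summable fun j ↦ cfBeta α p q (n + 2 * j) :=
  summable_of_ratio_norm_eventually_le one_half_lt_one <|
    .of_forall fun j ↦ abs_cfBeta_add_two_le hpq hθ (n + 2 * j)

end Differences

/-- For every `n`, the series `a_{n+2} β_{n+1} + a_{n+4} β_{n+3} + ⋯` converges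
and its sum is `−β_n`. -/
theorem hasSum_cfBeta_tail
    (α : ℝ) (hα : 0 < α) (hirr : Irrational α)
    (a : ℕ → ℕ) (ha : IsCFExpansion α a)
    (p q : ℕ → ℕ) (hpq : IsConvergents a p q)
    (n : ℕ) :
    HasSum (fun j : ℕ => (a (n + 2 * j + 2) : ℝ) * cfBeta α p q (n + 2 * j + 1))
      (-(cfBeta α p q n)) := by
  obtain ⟨θ, hθ⟩ := ha.exists_isCompleteQuotients hirr
  have hterm (j : ℕ) : (a (n + 2 * j + 2) : ℝ) * cfBeta α p q (n + 2 * j + 1) =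
      cfBeta α p q (n + 2 * (j + 1)) - cfBeta α p q (n + 2 * j) :=
    eq_sub_of_add_eq (cfBeta_add_two α hpq (n + 2 * j)).symm
  simp only [hterm]
  exact hasSum_succ_sub_of_summable (summable_cfBeta_add_two_mul hpq hθ n)
end

section
/- Let X ∈ ℕ with Ostrowski representation X = Σ_{n≥0} b_{n+1} q_n. Then Σ_{n≥0} b_{n+1} β_n lies in I_α; consequently f_α(X) = Σ_{n≥0} b_{n+1} β_n and g_α(X) = Σ_{n≥0} b_{n+1} p_n. -/
/-- The half-open interval `I_α = [−1/ζ_α, 1 − 1/ζ_α)` where `ζ_α = 1/(α − ⌊α⌋)`. -/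
def Ialpha (α : ℝ) : Set ℝ :=
  Set.Ico (-(1 / (1 / (α - (⌊α⌋ : ℝ))))) (1 - 1 / (1 / (α - (⌊α⌋ : ℝ))))

/-- `f` is the function `f_α : ℕ → I_α` with `f_α X` the unique element of `I_α`
such that `α X − f_α X` is a (natural) integer. -/
def IsFracPart (α : ℝ) (f : ℕ → ℝ) : Prop :=
  ∀ X : ℕ, f X ∈ Ialpha α ∧ ∃ U : ℕ, α * (X : ℝ) - f X = (U : ℝ)

/-!
Put `γ n = (-1)^n β_n`. If `θ` is the sequence of complete quotients, then `γ 0 = θ 0 - a 0` and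
`γ (n+1) = (θ (n+1) - a (n+1)) γ n`, so irrationality of `α` makes every `γ n` positive. The
recursion of the convergents becomes `γ n = a (n+2) γ (n+1) + γ (n+2)`, preceded by
`1 = a 1 γ 0 + γ 1`.

The alternating sum `S = t 0 - t 1 + t 2 - ⋯` of the terms `t n = d n γ n ≥ 0` equals `∑ d n β_n`.
Since `t (n+1) + γ (n+2) ≤ γ n`, peeling off one term at a time gives `-γ 0 < S < t 0 + γ 1`, and
`d 0 < a 1` bounds the right-hand side by `1 - γ 0`. Hence `S ∈ [-γ 0, 1 - γ 0) = I_α`. As `I_α` has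
length one and both `f_α X` and `S` differ from `α X` by an integer, they coincide.
-/

lemma alternating_sum_mem_Ioo {R : Type*} [Ring R] [PartialOrder R] [IsOrderedAddMonoid R]
    {t γ : ℕ → R} (hγ : ∀ n, 0 < γ n) (ht : ∀ n, 0 ≤ t n)
    (htγ : ∀ n, t (n + 1) + γ (n + 2) ≤ γ n) (N : ℕ) :
    ∑ n ∈ Finset.range N, (-1) ^ n * t n ∈ Set.Ioo (-γ 0) (t 0 + γ 1) := by
  induction N generalizing t γ with
  | zero => simpa using ⟨hγ 0, add_pos_of_nonneg_of_pos (ht 0) (hγ 1)⟩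
  | succ N ih =>
    obtain ⟨lower, upper⟩ := ih (fun n => hγ (n + 1)) (fun n => ht (n + 1)) (fun n => htγ (n + 1))
    have peel : ∑ n ∈ Finset.range (N + 1), (-1) ^ n * t n
        = t 0 - ∑ n ∈ Finset.range N, (-1) ^ n * t (n + 1) := by
      simp [Finset.sum_range_succ', pow_succ, sub_eq_neg_add]
    rw [peel]
    constructor
    · calc -γ 0 < -∑ n ∈ Finset.range N, (-1) ^ n * t (n + 1) :=
            neg_lt_neg (upper.trans_le (htγ 0))
        _ ≤ t 0 - ∑ n ∈ Finset.range N, (-1) ^ n * t (n + 1) := by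
            rw [sub_eq_add_neg]
            exact le_add_of_nonneg_left (ht 0)
    · rw [sub_lt_iff_lt_add, add_assoc, lt_add_iff_pos_right]
      exact neg_lt_iff_pos_add'.mp lower

lemma Ialpha_eq_Ico_fract (α : ℝ) :
    Ialpha α = Set.Ico (-Int.fract α) (-Int.fract α + 1) := by
  rw [Ialpha, one_div_one_div, Int.self_sub_floor, neg_add_eq_sub]

lemma eq_of_sub_intCast_mem_Ialpha {α x : ℝ} {m n : ℤ} (hm : x - m ∈ Ialpha α)
    (hn : x - n ∈ Ialpha α) : m = n := by
  rw [Ialpha_eq_Ico_fract] at hm hn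
  exact (existsUnique_sub_zsmul_mem_Ico one_pos x (-Int.fract α)).unique
    (by simpa using hm) (by simpa using hn)

/-- `θ` is a sequence of complete quotients with partial quotients `a`; the number being expanded
is `θ 0`, so `IsCFExpansion α a` says that such a `θ` with `θ 0 = α` exists. -/
def IsCompleteQuotients_s3 (a : ℕ → ℕ) (θ : ℕ → ℝ) : Prop :=
  ∀ n, (a n : ℤ) = ⌊θ n⌋ ∧ θ (n + 1) = 1 / (θ n - (⌊θ n⌋ : ℝ))

namespace IsCompleteQuotients_s3

variable {a : ℕ → ℕ} {θ : ℕ → ℝ}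

lemma fract_eq_sub (hθ : IsCompleteQuotients_s3 a θ) (n : ℕ) : Int.fract (θ n) = θ n - a n := by
  rw [Int.fract, ← (hθ n).1, Int.cast_natCast]

lemma succ_eq_inv_fract (hθ : IsCompleteQuotients_s3 a θ) (n : ℕ) :
    θ (n + 1) = (Int.fract (θ n))⁻¹ := by
  rw [(hθ n).2, one_div, Int.fract]

lemma irrational (hθ : IsCompleteQuotients_s3 a θ) (hirr : Irrational (θ 0)) (n : ℕ) :
    Irrational (θ n) := by
  induction n with
  | zero => exact hirr
  | succ n ih =>
    rw [hθ.succ_eq_inv_fract, hθ.fract_eq_sub]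
    exact (ih.sub_natCast (a n)).inv

lemma fract_pos (hθ : IsCompleteQuotients_s3 a θ) (hirr : Irrational (θ 0)) (n : ℕ) :
    0 < Int.fract (θ n) :=
  Int.fract_pos.mpr ((hθ.irrational hirr n).ne_int _)

lemma succ_mul_fract (hθ : IsCompleteQuotients_s3 a θ) (hirr : Irrational (θ 0)) (n : ℕ) :
    θ (n + 1) * Int.fract (θ n) = 1 := by
  rw [hθ.succ_eq_inv_fract, inv_mul_cancel₀ (hθ.fract_pos hirr n).ne']

end IsCompleteQuotients_s3

/-- The difference `β_n` of `α` multiplied by `(-1) ^ n`, the sign that makes it positive for every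
`n` when `α` is irrational. -/
noncomputable def altCfBeta (α : ℝ) (p q : ℕ → ℕ) (n : ℕ) : ℝ :=
  (-1) ^ n * cfBeta α p q n

lemma neg_one_pow_mul_altCfBeta (α : ℝ) (p q : ℕ → ℕ) (n : ℕ) :
    (-1) ^ n * altCfBeta α p q n = cfBeta α p q n := by
  rw [altCfBeta, ← mul_assoc, ← mul_pow, neg_one_mul, neg_neg, one_pow, one_mul]

lemma sum_mul_cfBeta (α : ℝ) (p q d : ℕ → ℕ) (s : Finset ℕ) :
    ∑ n ∈ s, (d n : ℝ) * cfBeta α p q n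
      = α * (∑ n ∈ s, d n * q n : ℕ) - (∑ n ∈ s, d n * p n : ℕ) := by
  push_cast
  rw [Finset.mul_sum, ← Finset.sum_sub_distrib]
  exact Finset.sum_congr rfl fun n _ => by rw [cfBeta]; ring

namespace IsConvergents

variable {α : ℝ} {a p q d : ℕ → ℕ} {θ : ℕ → ℝ}

lemma altCfBeta_zero (hpq : IsConvergents a p q) : altCfBeta α p q 0 = α - a 0 := by
  obtain ⟨hp0, hq0, -⟩ := hpq
  simp [altCfBeta, cfBeta, hp0, hq0]

lemma mul_altCfBeta_zero_add (hpq : IsConvergents a p q) :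
    a 1 * altCfBeta α p q 0 + altCfBeta α p q 1 = 1 := by
  obtain ⟨hp0, hq0, hp1, hq1, -⟩ := hpq
  simp only [altCfBeta, cfBeta, hp0, hq0, hp1, hq1]
  push_cast
  ring

lemma mul_altCfBeta_succ_add (hpq : IsConvergents a p q) (n : ℕ) :
    a (n + 2) * altCfBeta α p q (n + 1) + altCfBeta α p q (n + 2) = altCfBeta α p q n := by
  obtain ⟨-, -, -, -, hp, hq⟩ := hpq
  simp only [altCfBeta, cfBeta, hp, hq]
  push_cast
  ring

lemma altCfBeta_zero_eq_fract (hpq : IsConvergents a p q) (ha : IsCFExpansion α a) :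
    altCfBeta α p q 0 = Int.fract α := by
  obtain ⟨θ, rfl, hθ : IsCompleteQuotients_s3 a θ⟩ := ha
  rw [hpq.altCfBeta_zero, hθ.fract_eq_sub]

lemma altCfBeta_succ_eq_fract_mul (hpq : IsConvergents a p q) (hθ : IsCompleteQuotients_s3 a θ)
    (hirr : Irrational (θ 0)) (n : ℕ) :
    altCfBeta (θ 0) p q (n + 1) = Int.fract (θ (n + 1)) * altCfBeta (θ 0) p q n := by
  have unit (n : ℕ) : θ (n + 1) * Int.fract (θ n) = 1 := hθ.succ_mul_fract hirr n
  rw [hθ.fract_eq_sub]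
  induction n with
  | zero =>
    have start := hpq.mul_altCfBeta_zero_add (α := θ 0)
    have fract_zero : altCfBeta (θ 0) p q 0 = Int.fract (θ 0) :=
      hpq.altCfBeta_zero.trans (hθ.fract_eq_sub 0).symm
    linear_combination start - unit 0 - θ 1 * fract_zero
  | succ n ih =>
    have unit_succ := unit (n + 1)
    rw [hθ.fract_eq_sub] at unit_succ
    linear_combination hpq.mul_altCfBeta_succ_add n - θ (n + 2) * ih
      - altCfBeta (θ 0) p q n * unit_succ

lemma altCfBeta_pos (hpq : IsConvergents a p q) (ha : IsCFExpansion α a) (hirr : Irrational α)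
    (n : ℕ) : 0 < altCfBeta α p q n := by
  obtain ⟨θ, rfl, hθ : IsCompleteQuotients_s3 a θ⟩ := ha
  induction n with
  | zero =>
    rw [hpq.altCfBeta_zero, ← hθ.fract_eq_sub]
    exact hθ.fract_pos hirr 0
  | succ n ih =>
    rw [hpq.altCfBeta_succ_eq_fract_mul hθ hirr]
    exact mul_pos (hθ.fract_pos hirr (n + 1)) ih

lemma sum_mul_cfBeta_mem_Ialpha (hpq : IsConvergents a p q) (ha : IsCFExpansion α a)
    (hirr : Irrational α) (hd0 : d 0 < a 1) (hd : ∀ n, d (n + 1) ≤ a (n + 2)) (N : ℕ) :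
    ∑ n ∈ Finset.range N, (d n : ℝ) * cfBeta α p q n ∈ Ialpha α := by
  have pos := hpq.altCfBeta_pos ha hirr
  have term_add_le (n : ℕ) : d (n + 1) * altCfBeta α p q (n + 1) + altCfBeta α p q (n + 2)
      ≤ altCfBeta α p q n := by
    rw [← hpq.mul_altCfBeta_succ_add n]
    have succ_nonneg := (pos (n + 1)).le
    gcongr
    exact hd n
  have first_add_le : d 0 * altCfBeta α p q 0 + altCfBeta α p q 1 ≤ 1 - altCfBeta α p q 0 := by
    have digit_le : (d 0 + 1) * altCfBeta α p q 0 ≤ a 1 * altCfBeta α p q 0 :=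
      mul_le_mul_of_nonneg_right (mod_cast hd0) (pos 0).le
    linarith [hpq.mul_altCfBeta_zero_add (α := α)]
  have alternating : ∑ n ∈ Finset.range N, (d n : ℝ) * cfBeta α p q n
      = ∑ n ∈ Finset.range N, (-1) ^ n * (d n * altCfBeta α p q n) :=
    Finset.sum_congr rfl fun n _ => by rw [mul_left_comm, neg_one_pow_mul_altCfBeta]
  obtain ⟨lower, upper⟩ := alternating_sum_mem_Ioo pos
    (fun n => mul_nonneg (d n).cast_nonneg (pos n).le) term_add_le N
  rw [alternating, Ialpha_eq_Ico_fract, ← hpq.altCfBeta_zero_eq_fract ha]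
  exact ⟨lower.le, by linarith⟩

end IsConvergents

theorem fracPart_eq_sum_cfBeta_general
    {α : ℝ} (hirr : Irrational α) {a : ℕ → ℕ} (ha : IsCFExpansion α a)
    {p q : ℕ → ℕ} (hpq : IsConvergents a p q)
    {fα : ℕ → ℝ} (hf : IsFracPart α fα)
    {gα : ℕ → ℕ} (hg : ∀ X : ℕ, (gα X : ℝ) = α * (X : ℝ) - fα X)
    {X : ℕ} {d : ℕ → ℕ} (hd0 : d 0 < a 1) (hd : ∀ n, d (n + 1) ≤ a (n + 2))
    {N : ℕ} (hX : X = ∑ n ∈ Finset.range N, d n * q n) :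
    (∑ n ∈ Finset.range N, (d n : ℝ) * cfBeta α p q n) ∈ Ialpha α ∧
    fα X = ∑ n ∈ Finset.range N, (d n : ℝ) * cfBeta α p q n ∧
    gα X = ∑ n ∈ Finset.range N, d n * p n := by
  have sum_mem := hpq.sum_mul_cfBeta_mem_Ialpha ha hirr hd0 hd N
  have sum_eq := sum_mul_cfBeta α p q d (Finset.range N)
  rw [← hX] at sum_eq
  have f_eq : fα X = α * X - gα X := by rw [hg, sub_sub_cancel]
  have g_eq : gα X = ∑ n ∈ Finset.range N, d n * p n := by
    have f_mem := (hf X).1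
    rw [f_eq] at f_mem
    rw [sum_eq] at sum_mem
    exact_mod_cast eq_of_sub_intCast_mem_Ialpha (m := gα X)
      (n := (∑ n ∈ Finset.range N, d n * p n : ℕ)) (mod_cast f_mem) (mod_cast sum_mem)
  exact ⟨sum_mem, by rw [f_eq, g_eq, sum_eq], g_eq⟩

/-- If `X` has Ostrowski digits `d` (all zero from `N` on), then
`Σ_n d n * β n` lies in `I_α`; consequently `f_α X = Σ_n d n * β n` and
`g_α X = Σ_n d n * p n`, where `g_α X = α X − f_α X`. -/
theorem fracPart_eq_sum_cfBeta
    (α : ℝ) (hα : 0 < α) (hirr : Irrational α)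
    (a : ℕ → ℕ) (ha : IsCFExpansion α a)
    (p q : ℕ → ℕ) (hpq : IsConvergents a p q)
    (fα : ℕ → ℝ) (hf : IsFracPart α fα)
    (gα : ℕ → ℕ) (hg : ∀ X : ℕ, (gα X : ℝ) = α * (X : ℝ) - fα X)
    (X : ℕ) (d : ℕ → ℕ) (hd : IsOstrowskiRep a q X d)
    (N : ℕ) (hN : ∀ n : ℕ, N ≤ n → d n = 0)
    (hX : X = ∑ n ∈ Finset.range N, d n * q n) :
    (∑ n ∈ Finset.range N, (d n : ℝ) * cfBeta α p q n) ∈ Ialpha α ∧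
    fα X = ∑ n ∈ Finset.range N, (d n : ℝ) * cfBeta α p q n ∧
    gα X = ∑ n ∈ Finset.range N, d n * p n := by
  exact fracPart_eq_sum_cfBeta_general hirr ha hpq hf hg hd.1 hd.2.1 hX
end

section
/- Suppose a_{n+k} = a_n for all n ∈ ℕ (α is purely periodic with period k ≥ 1). Then for every i ∈ ℕ there exist integers c_i and d_i such that for every n ∈ ℕ with k | n, one has p_{n+i} = c_i p_n + d_i p_{n+1} and q_{n+i} = c_i q_n + d_i q_{n+1}. -/
/-- `u` satisfies the recurrence of the convergents with partial quotients `a`, with arbitrary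
initial values `u 0` and `u 1`; the numerators and the denominators are both of this kind. As the
recurrence starts at `a 2`, neither `a 0` nor `a 1` enters. -/
def IsContinuantSeq {R M : Type*} [Semiring R] [AddCommMonoid M] [Module R M]
    (a : ℕ → R) (u : ℕ → M) : Prop :=
  ∀ n : ℕ, u (n + 2) = a (n + 2) • u (n + 1) + u n

/-- The solution of the recurrence of the convergents with initial values `x` and `y`. For `(1, 0)`
and `(0, 1)` these are the coefficients `cᵢ` and `dᵢ`. -/
def continuantSeq {R : Type*} [Semiring R] (a : ℕ → R) (x y : R) : ℕ → R
  | 0 => x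
  | 1 => y
  | n + 2 => a (n + 2) * continuantSeq a x y (n + 1) + continuantSeq a x y n

namespace IsContinuantSeq

variable {R M : Type*} [Semiring R] [AddCommMonoid M] [Module R M] {a : ℕ → R} {u : ℕ → M}

theorem shift (hu : IsContinuantSeq a u) (n : ℕ) :
    IsContinuantSeq (fun i => a (n + i)) (fun i => u (n + i)) :=
  fun i => hu (n + i)

theorem eq_smul_add_smul (hu : IsContinuantSeq a u) (i : ℕ) :
    u i = continuantSeq a 1 0 i • u 0 + continuantSeq a 0 1 i • u 1 := by
  induction i using Nat.twoStepInduction with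
  | zero => simp [continuantSeq]
  | one => simp [continuantSeq]
  | more i ih₀ ih₁ =>
    rw [hu i, ih₀, ih₁]
    simp only [continuantSeq, smul_add, add_smul, mul_smul]
    abel

end IsContinuantSeq

theorem periodic_shift_eq_self {β : Type*} {a : ℕ → β} {k n : ℕ} (ha : Function.Periodic a k)
    (hn : k ∣ n) : (fun i => a (n + i)) = a := by
  obtain ⟨t, rfl⟩ := hn
  funext i
  rw [add_comm, mul_comm]
  exact ha.nat_mul t i

theorem convergents_shift_linear_combination_general {R M : Type*} [Semiring R] [AddCommMonoid M]
    [Module R M] {a : ℕ → R} {u : ℕ → M} {k n : ℕ} (ha : Function.Periodic a k)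
    (hu : IsContinuantSeq a u) (hn : k ∣ n) (i : ℕ) :
    u (n + i) = continuantSeq a 1 0 i • u n + continuantSeq a 0 1 i • u (n + 1) := by
  have hshift := (hu.shift n).eq_smul_add_smul i
  rwa [periodic_shift_eq_self ha hn] at hshift

namespace IsConvergents

variable {a p q : ℕ → ℕ}

theorem isContinuantSeq_num (h : IsConvergents a p q) : IsContinuantSeq a p :=
  h.2.2.2.2.1

theorem isContinuantSeq_den (h : IsConvergents a p q) : IsContinuantSeq a q :=
  h.2.2.2.2.2

end IsConvergents

/-- If the continued fraction of `α` is purely periodic with period `k`, then for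
every `i` there are integers `cᵢ, dᵢ` with
`(p_{n+i}, q_{n+i}) = cᵢ (p_n, q_n) + dᵢ (p_{n+1}, q_{n+1})` whenever `k ∣ n`. -/
theorem convergents_shift_linear_combination
    (α : ℝ) (hα : 0 < α) (hirr : Irrational α)
    (a : ℕ → ℕ) (ha : IsCFExpansion α a)
    (p q : ℕ → ℕ) (hpq : IsConvergents a p q)
    (k : ℕ) (hk : 1 ≤ k) (hper : ∀ n : ℕ, a (n + k) = a n) :
    ∀ i : ℕ, ∃ c d : ℤ, ∀ n : ℕ, k ∣ n →
      (p (n + i) : ℤ) = c * (p n : ℤ) + d * (p (n + 1) : ℤ) ∧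
      (q (n + i) : ℤ) = c * (q n : ℤ) + d * (q (n + 1) : ℤ) := by
  intro i
  refine ⟨(continuantSeq a 1 0 i : ℕ), (continuantSeq a 0 1 i : ℕ), fun n hn => ⟨?_, ?_⟩⟩
  · exact_mod_cast convergents_shift_linear_combination_general hper hpq.isContinuantSeq_num hn i
  · exact_mod_cast convergents_shift_linear_combination_general hper hpq.isContinuantSeq_den hn i
end

section
/- Suppose a_{n+k} = a_n for all n ∈ ℕ (α is purely periodic with period k ≥ 1), and let P ≥ 2 be an integer. Then there exists m > 0 such that for every i ∈ ℕ, p_{mk+i} ≡ p_i (mod P) and q_{mk+i} ≡ q_i (mod P). -/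
section Transition

variable {M : Type*} [Monoid M]

/-- The transition element `σ (n - 1) * ⋯ * σ 1 * σ 0` of the non-autonomous system whose step at
time `n` is `σ n`: it takes the state at time `0` to the state at time `n`. Later factors stand on
the left, as for the composition of maps. -/
def transition (σ : ℕ → M) : ℕ → M
  | 0 => 1
  | n + 1 => σ n * transition σ n

lemma eq_transition_smul {X : Type*} [MulAction M X] {σ : ℕ → M} {x : ℕ → X}
    (hx : ∀ n, x (n + 1) = σ n • x n) (n : ℕ) : x n = transition σ n • x 0 := by
  induction n with
  | zero => exact (one_smul M (x 0)).symm
  | succ n ih => rw [hx, ih, transition, mul_smul]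

lemma transition_add_period {σ : ℕ → M} {k : ℕ} (hσ : Function.Periodic σ k) (n : ℕ) :
    transition σ (n + k) = transition σ n * transition σ k := by
  induction n with
  | zero => rw [zero_add, transition, one_mul]
  | succ n ih => rw [Nat.add_right_comm, transition, transition, hσ, ih, mul_assoc]

lemma transition_add_mul_period {σ : ℕ → M} {k : ℕ} (hσ : Function.Periodic σ k) (n m : ℕ) :
    transition σ (n + m * k) = transition σ n * transition σ k ^ m := by
  induction m with
  | zero => rw [zero_mul, add_zero, pow_zero, mul_one]
  | succ m ih => rw [add_one_mul, ← add_assoc, transition_add_period hσ, ih, pow_succ, mul_assoc]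

lemma periodic_transition {σ : ℕ → M} {k : ℕ} (hσ : Function.Periodic σ k) :
    Function.Periodic (transition σ) (orderOf (transition σ k) * k) := fun n => by
  rw [transition_add_mul_period hσ, pow_orderOf_eq_one, mul_one]

end Transition

theorem exists_common_period_of_smul_recurrence {G X : Type*} [Group G] [Finite G] [MulAction G X]
    {σ : ℕ → G} {k : ℕ} (hσ : Function.Periodic σ k) :
    ∃ m : ℕ, 0 < m ∧ ∀ x : ℕ → X, (∀ n, x (n + 1) = σ n • x n) → Function.Periodic x (m * k) := by
  refine ⟨orderOf (transition σ k), orderOf_pos _, fun x hx n => ?_⟩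
  rw [eq_transition_smul hx, periodic_transition hσ, ← eq_transition_smul hx]

section LinearRecurrence

variable {R : Type*} [Ring R]

/-- One step `(uₙ, uₙ₊₁) ↦ (uₙ₊₁, uₙ₊₂)` of the recurrence `uₙ₊₂ = c uₙ₊₁ + uₙ` satisfied by the
numerators and denominators of convergents, as a permutation of the pairs of consecutive terms. -/
def recurrenceStep (c : R) : Equiv.Perm (R × R) where
  toFun v := (v.2, c * v.2 + v.1)
  invFun w := (w.2 - c * w.1, w.1)
  left_inv _ := Prod.ext (add_sub_cancel_left _ _) rfl
  right_inv _ := Prod.ext rfl (add_sub_cancel _ _)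

theorem exists_common_period_of_linear_recurrence [Finite R] {b : ℕ → R} {k : ℕ}
    (hb : Function.Periodic b k) :
    ∃ m : ℕ, 0 < m ∧ ∀ u : ℕ → R, (∀ n, u (n + 2) = b n * u (n + 1) + u n) →
      Function.Periodic u (m * k) := by
  obtain ⟨m, hm, hperiod⟩ :=
    exists_common_period_of_smul_recurrence (X := R × R) (hb.comp recurrenceStep)
  refine ⟨m, hm, fun u hu => ?_⟩
  have hpair : Function.Periodic (fun n => (u n, u (n + 1))) (m * k) :=
    hperiod _ fun n => Prod.ext rfl (hu n)
  exact hpair.comp Prod.fst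

end LinearRecurrence

theorem convergents_periodic_mod_general {a p q : ℕ → ℕ} (hpq : IsConvergents a p q)
    {k : ℕ} (hper : Function.Periodic a k) {P : ℕ} (hP : P ≠ 0) :
    ∃ m : ℕ, 0 < m ∧ ∀ i : ℕ,
      p (m * k + i) ≡ p i [MOD P] ∧ q (m * k + i) ≡ q i [MOD P] := by
  obtain ⟨-, -, -, -, hp, hq⟩ := hpq
  have : NeZero P := ⟨hP⟩
  have hcoeff : Function.Periodic (fun n => (a (n + 2) : ZMod P)) k :=
    (hper.add_const 2).comp Nat.cast
  obtain ⟨m, hm, hperiod⟩ := exists_common_period_of_linear_recurrence hcoeff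
  have modEq_of_recurrence (u : ℕ → ℕ) (hu : ∀ n, u (n + 2) = a (n + 2) * u (n + 1) + u n)
      (i : ℕ) : u (m * k + i) ≡ u i [MOD P] := by
    rw [← ZMod.natCast_eq_natCast_iff, add_comm]
    exact hperiod (fun n => (u n : ZMod P)) (fun n => mod_cast congrArg Nat.cast (hu n)) i
  exact ⟨m, hm, fun i => ⟨modEq_of_recurrence p hp i, modEq_of_recurrence q hq i⟩⟩

/-- If the continued fraction of `α` is purely periodic with period `k`, and
`P ≥ 2`, then there is `m > 0` with `p_{mk+i} ≡ p_i` and `q_{mk+i} ≡ q_i (mod P)`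
for every `i`. -/
theorem convergents_periodic_mod
    (α : ℝ) (hα : 0 < α) (hirr : Irrational α)
    (a : ℕ → ℕ) (ha : IsCFExpansion α a)
    (p q : ℕ → ℕ) (hpq : IsConvergents a p q)
    (k : ℕ) (hk : 1 ≤ k) (hper : ∀ n : ℕ, a (n + k) = a n)
    (P : ℕ) (hP : 2 ≤ P) :
    ∃ m : ℕ, 0 < m ∧ ∀ i : ℕ,
      p (m * k + i) ≡ p i [MOD P] ∧ q (m * k + i) ≡ q i [MOD P] :=
  convergents_periodic_mod_general hpq hper (by omega)
end

section
/- Let n ∈ ℕ and Z ∈ ℕ. Then [q_m](Z) = 0 for all m ≤ n if and only if there exists Z' ∈ ℕ such that αZ − Z' lies strictly between −β_n and −β_{n+1}, i.e., min(−β_n, −β_{n+1}) < αZ − Z' < max(−β_n, −β_{n+1}). Moreover, such Z' is unique whenever it exists. -/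
/-- `x` lies strictly between `u` and `v`. -/
def StrictlyBetween (x u v : ℝ) : Prop := min u v < x ∧ x < max u v

/-!
Put `δ₀ = 1` and `δₙ₊₁ = |βₙ|`. These are the remainders of the Euclidean algorithm applied to `1`
and the fractional part of `α`: they are positive, `δₙ = aₙ₊₁ δₙ₊₁ + δₙ₊₂`, and `βₙ = (-1)ⁿ δₙ₊₁`.
Hence `αZ - Z'` lies between `-βₙ` and `-βₙ₊₁` iff `-δₙ₊₁ < (-1)ⁿ (αZ - Z') < δₙ₊₂`. These intervals
are nested, and they have length at most `1`, which gives uniqueness.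

Let `d` be the Ostrowski digits of `Z` and `W = ∑ dⱼ pⱼ`, so that `αZ - W = ∑ dⱼ βⱼ`. If the first
`k` digits vanish, then `(-1)ᵏ (αZ - W)` is the alternating sum
`S = dₖ δₖ₊₁ - dₖ₊₁ δₖ₊₂ + dₖ₊₂ δₖ₊₃ - ⋯`, and `dⱼ ≤ aⱼ₊₁` forces `-δₖ₊₁ < S < δₖ`. For `k = n + 1`
this says that `Z' = W` works. Conversely, suppose that `dₖ ≠ 0` is the first nonzero digit and that
some `Z'` works for an `n ≥ k`, hence for `n = k`. Then `dₖ₊₁ < aₖ₊₂` gives `δₖ₊₂ < S`, and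
`S < 1 - δₖ₊₁` follows from `S < δₖ` if `k > 0` and from `d₀ < a₁` if `k = 0`. So
`S - (-1)ᵏ (αZ - Z')` is an integer strictly between `0` and `1`, which is absurd.
-/

section AlternatingSums

variable {R : Type*} [CommRing R]

/-- The alternating sum `d m * δ (m+1) - d (m+1) * δ (m+2) + ⋯` with `N` terms. For the remainders
`δ` of a continued fraction it is, up to sign, a window of the sum `∑ dₖ βₖ`. -/
def altSum (d : ℕ → ℕ) (δ : ℕ → R) (N m : ℕ) : R :=
  ∑ j ∈ Finset.range N, (-1) ^ j * (d (m + j) * δ (m + j + 1))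

lemma altSum_succ (d : ℕ → ℕ) (δ : ℕ → R) (N m : ℕ) :
    altSum d δ (N + 1) m = d m * δ (m + 1) - altSum d δ N (m + 1) := by
  simp only [altSum, Finset.sum_range_succ', pow_succ, mul_neg_one, neg_mul,
    Finset.sum_neg_distrib, add_zero, pow_zero, one_mul, Nat.add_right_comm m 1, ← add_assoc m]
  ring

lemma altSum_eq_of_forall_lt {d : ℕ → ℕ} {k : ℕ} (hd : ∀ j < k, d j = 0) (δ : ℕ → R) (N : ℕ) :
    altSum d δ (k + N) 0 = (-1) ^ k * altSum d δ N k := by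
  have hzero : ∑ j ∈ Finset.range k, (-1) ^ j * ((d j : R) * δ (j + 1)) = 0 :=
    Finset.sum_eq_zero fun j hj => by
      rw [hd j (Finset.mem_range.1 hj), Nat.cast_zero, zero_mul, mul_zero]
  simp only [altSum, zero_add, Finset.sum_range_add, hzero, Finset.mul_sum, pow_add, mul_assoc]

end AlternatingSums

section Remainders

variable {R : Type*} [CommRing R] [LinearOrder R] [IsStrictOrderedRing R]

/-- `δ` is the sequence of remainders of a nonterminating Euclidean algorithm that starts with `1`
and has quotients `a 1, a 2, …`. For the continued fraction of `α` it is the sequence of the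
`|β_{n-1}|`; the shift by one lets the recurrence hold from `|β_{-1}| = 1` on. -/
structure IsRemainderSeq (a : ℕ → ℕ) (δ : ℕ → R) : Prop where
  zero : δ 0 = 1
  pos : ∀ n, 0 < δ n
  eq_add : ∀ n, δ n = a (n + 1) * δ (n + 1) + δ (n + 2)
  one_le : ∀ n, 1 ≤ a (n + 1)

variable {a d : ℕ → ℕ} {δ : ℕ → R}

namespace IsRemainderSeq

lemma add_le (hδ : IsRemainderSeq a δ) (n : ℕ) : δ (n + 1) + δ (n + 2) ≤ δ n := by
  have h : (1 : R) ≤ a (n + 1) := by exact_mod_cast hδ.one_le n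
  rw [hδ.eq_add n]
  gcongr
  exact le_mul_of_one_le_left (hδ.pos _).le h

lemma add_succ_le_one (hδ : IsRemainderSeq a δ) (n : ℕ) : δ (n + 1) + δ (n + 2) ≤ 1 := by
  induction n with
  | zero => exact hδ.zero ▸ hδ.add_le 0
  | succ n ih => linarith [hδ.add_le (n + 1), hδ.pos (n + 2)]

lemma altSum_mem_Ioo (hδ : IsRemainderSeq a δ) (hd : ∀ n, d n ≤ a (n + 1)) (N m : ℕ) :
    altSum d δ N m ∈ Set.Ioo (-δ (m + 1)) (δ m) := by
  induction N generalizing m with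
  | zero => simpa [altSum] using ⟨hδ.pos (m + 1), hδ.pos m⟩
  | succ N ih =>
    have hpos := hδ.pos (m + 1)
    have hdigit : (d m : R) * δ (m + 1) ≤ a (m + 1) * δ (m + 1) := by
      gcongr
      exact hd m
    have hnonneg : 0 ≤ (d m : R) * δ (m + 1) := by positivity
    obtain ⟨hlower, hupper⟩ := ih (m + 1)
    rw [altSum_succ]
    constructor <;> linarith [hδ.eq_add m]

lemma altSum_lt_sub (hδ : IsRemainderSeq a δ) (hd : ∀ n, d n ≤ a (n + 1)) {m : ℕ}
    (hm : d m < a (m + 1)) (N : ℕ) : altSum d δ N m < δ m - δ (m + 1) := by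
  cases N with
  | zero => simpa [altSum] using by linarith [hδ.add_le m, hδ.pos (m + 2)]
  | succ N =>
    have hdigit : (d m + 1 : R) * δ (m + 1) ≤ a (m + 1) * δ (m + 1) := by
      have := (hδ.pos (m + 1)).le
      gcongr
      exact_mod_cast hm
    rw [altSum_succ]
    linarith [hδ.eq_add m, (hδ.altSum_mem_Ioo hd N (m + 1)).1]

lemma lt_altSum_succ (hδ : IsRemainderSeq a δ) (hd : ∀ n, d n ≤ a (n + 1)) {m : ℕ}
    (hm : d m ≠ 0) (hm' : d (m + 1) < a (m + 2)) (N : ℕ) :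
    δ (m + 2) < altSum d δ (N + 1) m := by
  have hdigit : δ (m + 1) ≤ d m * δ (m + 1) :=
    le_mul_of_one_le_left (hδ.pos _).le (by exact_mod_cast Nat.one_le_iff_ne_zero.2 hm)
  rw [altSum_succ]
  linarith [hδ.altSum_lt_sub hd hm' N]

lemma altSum_lt_one_sub (hδ : IsRemainderSeq a δ) (hd : ∀ n, d n ≤ a (n + 1))
    (hd0 : d 0 < a 1) (N m : ℕ) : altSum d δ N m < 1 - δ (m + 1) := by
  cases m with
  | zero => exact hδ.zero ▸ hδ.altSum_lt_sub hd hd0 N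
  | succ m => linarith [(hδ.altSum_mem_Ioo hd N (m + 1)).2, hδ.add_succ_le_one m]

lemma mem_Ioo_of_le (hδ : IsRemainderSeq a δ) {x : R} {k n : ℕ} (hkn : k ≤ n)
    (hx : (-1) ^ n * x ∈ Set.Ioo (-δ (n + 1)) (δ (n + 2))) :
    (-1) ^ k * x ∈ Set.Ioo (-δ (k + 1)) (δ (k + 2)) := by
  induction n, hkn using Nat.le_induction with
  | base => exact hx
  | succ n _ ih =>
    rw [pow_succ, mul_neg_one, neg_mul] at hx
    exact ih ⟨by linarith [hx.2, hδ.add_le (n + 1), hδ.pos (n + 2)], by linarith [hx.1]⟩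

end IsRemainderSeq

lemma eq_of_abs_neg_one_pow_mul_sub_lt_one {x : R} {U V n : ℕ}
    (h : |(-1) ^ n * (x - U) - (-1) ^ n * (x - V)| < 1) : U = V := by
  rw [← mul_sub, abs_mul, abs_neg_one_pow, one_mul, sub_sub_sub_cancel_left] at h
  have h' : |(V : ℤ) - U| < 1 := by exact_mod_cast h
  rw [Int.abs_lt_one_iff] at h'
  omega

lemma IsRemainderSeq.eq_of_mem_Ioo (hδ : IsRemainderSeq a δ) {x : R} {n U V : ℕ}
    (hU : (-1) ^ n * (x - U) ∈ Set.Ioo (-δ (n + 1)) (δ (n + 2)))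
    (hV : (-1) ^ n * (x - V) ∈ Set.Ioo (-δ (n + 1)) (δ (n + 2))) : U = V := by
  refine eq_of_abs_neg_one_pow_mul_sub_lt_one (x := x) (n := n) (abs_lt.2 ⟨?_, ?_⟩) <;>
    linarith [hδ.add_succ_le_one n, hU.1, hU.2, hV.1, hV.2]

end Remainders

section ContinuedFraction

variable {α : ℝ} {a p q d : ℕ → ℕ} {δ : ℕ → ℝ}

lemma irrational_of_succ_eq_inv_fract {θ : ℕ → ℝ} (h0 : Irrational (θ 0))
    (hθ : ∀ n, θ (n + 1) = (Int.fract (θ n))⁻¹) (n : ℕ) : Irrational (θ n) := by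
  induction n with
  | zero => exact h0
  | succ n ih => exact hθ n ▸ (ih.sub_intCast ⌊θ n⌋).inv

lemma isRemainderSeq_prod_fract {K : Type*} [Field K] [LinearOrder K] [IsStrictOrderedRing K]
    [FloorRing K] {θ : ℕ → K} (hθ : ∀ n, θ (n + 1) = (Int.fract (θ n))⁻¹)
    (hpos : ∀ n, 0 < Int.fract (θ n)) (ha : ∀ n, (a n : ℤ) = ⌊θ n⌋) :
    IsRemainderSeq a fun n => ∏ k ∈ Finset.range n, Int.fract (θ k) := by
  refine ⟨rfl, fun n => Finset.prod_pos fun k _ => hpos k, fun n => ?_, fun n => ?_⟩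
  · have hsplit : (a (n + 1) : K) + Int.fract (θ (n + 1)) = (Int.fract (θ n))⁻¹ := by
      rw [← hθ, ← Int.floor_add_fract (θ (n + 1)), ← ha]
      simp
    have hone : Int.fract (θ n) * (a (n + 1) + Int.fract (θ (n + 1))) = 1 := by
      rw [hsplit, mul_inv_cancel₀ (hpos n).ne']
    simp only [Finset.prod_range_succ]
    linear_combination -(∏ k ∈ Finset.range n, Int.fract (θ k)) * hone
  · have hone : 1 ≤ θ (n + 1) := hθ n ▸ (one_le_inv₀ (hpos n)).2 (Int.fract_lt_one _).le
    have hfloor : (1 : ℤ) ≤ a (n + 1) := ha (n + 1) ▸ Int.le_floor.2 (by exact_mod_cast hone)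
    exact_mod_cast hfloor

lemma IsCFExpansion.exists_isRemainderSeq (ha : IsCFExpansion α a) (hα : Irrational α) :
    ∃ δ : ℕ → ℝ, IsRemainderSeq a δ ∧ δ 1 = α - a 0 := by
  obtain ⟨θ, rfl, hθ⟩ := ha
  have hsucc (n : ℕ) : θ (n + 1) = (Int.fract (θ n))⁻¹ := by
    rw [(hθ n).2, one_div, Int.self_sub_floor]
  have hpos (n : ℕ) : 0 < Int.fract (θ n) :=
    (Int.fract_nonneg _).lt_of_ne'
      ((irrational_of_succ_eq_inv_fract hα hsucc n).sub_intCast ⌊θ n⌋).ne_zero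
  refine ⟨_, isRemainderSeq_prod_fract hsucc hpos fun n => (hθ n).1, ?_⟩
  simp [← Int.self_sub_floor, ← (hθ 0).1]

lemma IsConvergents.cfBeta_eq (hpq : IsConvergents a p q) (hδ : IsRemainderSeq a δ)
    (hδ1 : δ 1 = α - a 0) (n : ℕ) : cfBeta α p q n = (-1) ^ n * δ (n + 1) := by
  obtain ⟨hp0, hq0, hp1, hq1, hp, hq⟩ := hpq
  induction n using Nat.twoStepInduction with
  | zero => simp [cfBeta, hp0, hq0, hδ1]
  | one =>
    have hone : 1 = a 1 * δ 1 + δ 2 := hδ.zero ▸ hδ.eq_add 0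
    simp only [cfBeta, hp1, hq1]
    push_cast
    linear_combination -hone - a 1 * hδ1
  | more n ih₀ ih₁ =>
    have hrec : cfBeta α p q (n + 2) = a (n + 2) * cfBeta α p q (n + 1) + cfBeta α p q n := by
      simp only [cfBeta, hp, hq]
      push_cast
      ring
    rw [hrec, ih₀, ih₁]
    linear_combination (-1) ^ n * hδ.eq_add (n + 1)

lemma strictlyBetween_neg_iff {x u v : ℝ} (hu : 0 < u) (hv : 0 < v) (n : ℕ) :
    StrictlyBetween x (-((-1) ^ n * u)) (-((-1) ^ (n + 1) * v)) ↔
      (-1) ^ n * x ∈ Set.Ioo (-u) v := by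
  have huv : -u ≤ v := by linarith
  have hvu : -v ≤ u := by linarith
  rcases neg_one_pow_eq_or ℝ n with h | h
  · simp [StrictlyBetween, pow_succ, h, huv]
  · simp [StrictlyBetween, pow_succ, h, hvu, neg_lt, and_comm]

namespace IsOstrowskiRep

variable {X : ℕ}

lemma digit_le (hd : IsOstrowskiRep a q X d) (n : ℕ) : d n ≤ a (n + 1) := by
  cases n with
  | zero => exact hd.1.le
  | succ n => exact hd.2.1 n

lemma digit_succ_lt (hd : IsOstrowskiRep a q X d) {n : ℕ} (hn : d n ≠ 0) :
    d (n + 1) < a (n + 2) :=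
  (hd.2.1 n).lt_of_ne fun h => hn (hd.2.2.1 n h)

lemma exists_mul_sub_eq_altSum (hd : IsOstrowskiRep a q X d)
    (hβ : ∀ n, cfBeta α p q n = (-1) ^ n * δ (n + 1)) {k : ℕ} (hk : ∀ j < k, d j = 0) :
    ∃ W N : ℕ, (-1) ^ k * (α * X - W) = altSum d δ (N + 1) k := by
  obtain ⟨-, -, -, N, hN, hX⟩ := hd
  set M := k + (N + 1)
  have hXM : X = ∑ j ∈ Finset.range M, d j * q j := by
    rw [hX, Finset.eventually_constant_sum (fun j hj => by rw [hN j hj, zero_mul])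
      (show N ≤ M by omega)]
  refine ⟨∑ j ∈ Finset.range M, d j * p j, N, ?_⟩
  calc (-1) ^ k * (α * X - ↑(∑ j ∈ Finset.range M, d j * p j))
      = (-1) ^ k * ∑ j ∈ Finset.range M, d j * cfBeta α p q j := by
        rw [hXM]
        push_cast
        rw [Finset.mul_sum, ← Finset.sum_sub_distrib]
        exact congrArg _ (Finset.sum_congr rfl fun j _ => by rw [cfBeta]; ring)
    _ = (-1) ^ k * altSum d δ M 0 := by simp only [altSum, zero_add, hβ, mul_left_comm]
    _ = altSum d δ (N + 1) k := by
        rw [altSum_eq_of_forall_lt hk, ← mul_assoc, ← mul_pow, neg_one_mul, neg_neg, one_pow,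
          one_mul]

lemma exists_mem_Ioo (hd : IsOstrowskiRep a q X d) (hδ : IsRemainderSeq a δ)
    (hβ : ∀ n, cfBeta α p q n = (-1) ^ n * δ (n + 1)) {n : ℕ} (hn : ∀ m ≤ n, d m = 0) :
    ∃ W : ℕ, (-1) ^ n * (α * X - W) ∈ Set.Ioo (-δ (n + 1)) (δ (n + 2)) := by
  obtain ⟨W, N, hW⟩ := hd.exists_mul_sub_eq_altSum hβ fun j hj => hn j (Nat.lt_succ_iff.1 hj)
  obtain ⟨hlower, hupper⟩ := hδ.altSum_mem_Ioo hd.digit_le (N + 1) (n + 1)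
  rw [← hW, pow_succ, mul_neg_one, neg_mul] at hlower hupper
  exact ⟨W, by linarith, by linarith⟩

lemma digit_eq_zero_of_mem_Ioo (hd : IsOstrowskiRep a q X d) (hδ : IsRemainderSeq a δ)
    (hβ : ∀ n, cfBeta α p q n = (-1) ^ n * δ (n + 1)) {V k : ℕ} (hk : ∀ j < k, d j = 0)
    (hV : (-1) ^ k * (α * X - V) ∈ Set.Ioo (-δ (k + 1)) (δ (k + 2))) : d k = 0 := by
  by_contra hdk
  obtain ⟨W, N, hW⟩ := hd.exists_mul_sub_eq_altSum hβ hk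
  have hlower : δ (k + 2) < (-1) ^ k * (α * X - W) :=
    hW ▸ hδ.lt_altSum_succ hd.digit_le hdk (hd.digit_succ_lt hdk) N
  have hupper : (-1) ^ k * (α * X - W) < 1 - δ (k + 1) :=
    hW ▸ hδ.altSum_lt_one_sub hd.digit_le hd.1 (N + 1) k
  obtain rfl : W = V := eq_of_abs_neg_one_pow_mul_sub_lt_one (x := α * X) (n := k)
    (abs_lt.2 ⟨by linarith [hV.2], by linarith [hV.1]⟩)
  exact hlower.not_gt hV.2

lemma digit_eq_zero_of_le (hd : IsOstrowskiRep a q X d) (hδ : IsRemainderSeq a δ)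
    (hβ : ∀ n, cfBeta α p q n = (-1) ^ n * δ (n + 1)) {V n : ℕ}
    (hV : (-1) ^ n * (α * X - V) ∈ Set.Ioo (-δ (n + 1)) (δ (n + 2))) (m : ℕ) (hm : m ≤ n) :
    d m = 0 := by
  induction m using Nat.strong_induction_on with
  | _ m ih =>
    exact hd.digit_eq_zero_of_mem_Ioo hδ hβ (fun j hj => ih j hj (hj.le.trans hm))
      (hδ.mem_Ioo_of_le hm hV)

end IsOstrowskiRep

end ContinuedFraction

/-- `[q_m](Z) = 0` for all `m ≤ n` iff there is `Z' ∈ ℕ` with `α Z − Z'` strictly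
between `−β_n` and `−β_{n+1}`; moreover such a `Z'` is unique. -/
theorem ostrowski_after_characterization
    (α : ℝ) (hα : 0 < α) (hirr : Irrational α)
    (a : ℕ → ℕ) (ha : IsCFExpansion α a)
    (p q : ℕ → ℕ) (hpq : IsConvergents a p q)
    (ost : ℕ → ℕ → ℕ) (host : ∀ X : ℕ, IsOstrowskiRep a q X (ost X))
    (n Z : ℕ) :
    ((∀ m : ℕ, m ≤ n → ost Z m = 0) ↔
      ∃ Z' : ℕ, StrictlyBetween (α * (Z : ℝ) - (Z' : ℝ))
        (-(cfBeta α p q n)) (-(cfBeta α p q (n + 1)))) ∧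
    (∀ Z' Z'' : ℕ,
      StrictlyBetween (α * (Z : ℝ) - (Z' : ℝ))
        (-(cfBeta α p q n)) (-(cfBeta α p q (n + 1))) →
      StrictlyBetween (α * (Z : ℝ) - (Z'' : ℝ))
        (-(cfBeta α p q n)) (-(cfBeta α p q (n + 1))) →
      Z' = Z'') := by
  obtain ⟨δ, hδ, hδ1⟩ := ha.exists_isRemainderSeq hirr
  have hβ := hpq.cfBeta_eq hδ hδ1
  simp only [hβ, strictlyBetween_neg_iff (hδ.pos _) (hδ.pos _)]
  refine ⟨⟨(host Z).exists_mem_Ioo hδ hβ, ?_⟩, fun _ _ => hδ.eq_of_mem_Ioo⟩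
  rintro ⟨Z', hZ'⟩
  exact (host Z).digit_eq_zero_of_le hδ hβ hZ'
end

section
/- Let n ∈ ℕ and Z ∈ ℕ. Then ([q_m](Z) = 0 for all m ≤ n and [q_{n+1}](Z) < a_{n+2}) if and only if there exists Z' ∈ ℕ such that αZ − Z' lies strictly between −β_{n+1} and −β_n − β_{n+1}, i.e., min(−β_{n+1}, −β_n − β_{n+1}) < αZ − Z' < max(−β_{n+1}, −β_n − β_{n+1}). Moreover, such Z' is unique whenever it exists. -/
section AlternatingTails

variable {R : Type*} [CommRing R]

/-- The alternating tail `∑_{m ≤ k < N} (-1) ^ (k - m) d_k B_{k+1}`, the sign being written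
`(-1) ^ (m + k)` to avoid subtraction in `ℕ`. For `B = absBeta α p q` it is
`(-1) ^ m ∑_{m ≤ k < N} d_k β_k`. -/
def altTail (d : ℕ → ℕ) (B : ℕ → R) (N m : ℕ) : R :=
  ∑ k ∈ Finset.Ico m N, (-1) ^ (m + k) * d k * B (k + 1)

/-- Digit strings of length at most `N` for the Ostrowski numeration with partial quotients `a`.
The strict bound `d 0 < a 1` is left out: if `IsEuclideanSeq a B`, it is equivalent to
`altTail d B N 0 ∈ signedInterval B 0`. -/
structure IsOstrowskiWord (a d : ℕ → ℕ) (N : ℕ) : Prop where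
  le : ∀ m, d m ≤ a (m + 1)
  carry : ∀ m, d (m + 1) = a (m + 2) → d m = 0
  eq_zero : ∀ m, N ≤ m → d m = 0

variable {a d : ℕ → ℕ} {B : ℕ → R} {N : ℕ}

lemma altTail_of_le {m : ℕ} (hm : N ≤ m) : altTail d B N m = 0 := by
  rw [altTail, Finset.Ico_eq_empty_of_le hm, Finset.sum_empty]

lemma altTail_of_lt {m : ℕ} (hm : m < N) :
    altTail d B N m = d m * B (m + 1) - altTail d B N (m + 1) := by
  have sign_succ (k : ℕ) : (-1 : R) ^ (m + 1 + k) = -(-1) ^ (m + k) := by ring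
  simp only [altTail, Finset.sum_eq_sum_Ico_succ_bot hm, sign_succ, neg_mul,
    Finset.sum_neg_distrib, sub_neg_eq_add, (Even.add_self m).neg_one_pow, one_mul]

namespace IsOstrowskiWord

lemma altTail_eq (hd : IsOstrowskiWord a d N) (m : ℕ) :
    altTail d B N m = d m * B (m + 1) - altTail d B N (m + 1) := by
  rcases lt_or_ge m N with hm | hm
  · exact altTail_of_lt hm
  · simp [altTail_of_le hm, altTail_of_le (hm.trans m.le_succ), hd.eq_zero m hm]

lemma neg_one_pow_mul_altTail_zero (hd : IsOstrowskiWord a d N) {k : ℕ}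
    (hzero : ∀ m < k, d m = 0) : (-1) ^ k * altTail d B N 0 = altTail d B N k := by
  induction k with
  | zero => simp
  | succ k ih =>
    have hk := hd.altTail_eq (B := B) k
    rw [hzero k k.lt_succ_self, ← ih fun m hm => hzero m (hm.trans k.lt_succ_self)] at hk
    linear_combination -hk

lemma lt_of_ne_zero (hd : IsOstrowskiWord a d N) {m : ℕ} (hm : d m ≠ 0) :
    d (m + 1) < a (m + 2) :=
  (hd.le (m + 1)).lt_of_ne fun h => hm (hd.carry m h)

lemma finsum_mul_eq_sum_range (hd : IsOstrowskiWord a d N) (f : ℕ → ℕ) :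
    ∑ᶠ k, d k * f k = ∑ k ∈ Finset.range N, d k * f k := by
  refine finsum_eq_sum_of_support_subset _ (Function.support_subset_iff'.2 fun k hk => ?_)
  rw [hd.eq_zero k (by simpa using hk), zero_mul]

end IsOstrowskiWord

variable [LinearOrder R]

/-- Positive sequences generated by the Euclidean algorithm, with quotients `a 1, a 2, …`: dividing
`B m` by `B (m + 1)` gives the quotient `a (m + 1)` and the remainder `B (m + 2)`. -/
structure IsEuclideanSeq (a : ℕ → ℕ) (B : ℕ → R) : Prop where
  pos : ∀ m, 0 < B m
  eq_mul_add : ∀ m, B m = a (m + 1) * B (m + 1) + B (m + 2)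
  one_le : ∀ m, 1 ≤ a (m + 1)

/-- The interval of those `y` for which `(-1) ^ k * y` lies between `-B (k + 1)` and
`B k - B (k + 1)`. For `B = absBeta α p q` and `k = n + 1` it is the interval between `-β_{n+1}`
and `-β_n - β_{n+1}`. -/
def signedInterval (B : ℕ → R) (k : ℕ) : Set R :=
  {y | (-1) ^ k * y ∈ Set.Ioo (-B (k + 1)) (B k - B (k + 1))}

lemma mem_signedInterval {k : ℕ} {y : R} :
    y ∈ signedInterval B k ↔ (-1) ^ k * y ∈ Set.Ioo (-B (k + 1)) (B k - B (k + 1)) :=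
  Iff.rfl

variable [IsStrictOrderedRing R]

lemma mem_signedInterval_succ {k : ℕ} {y : R} :
    y ∈ signedInterval B (k + 1) ↔ (-1) ^ k * y ∈ Set.Ioo (B (k + 2) - B (k + 1)) (B (k + 2)) := by
  simp only [mem_signedInterval, Set.mem_Ioo, pow_succ, mul_neg_one, neg_mul, neg_lt_neg_iff]
  rw [and_comm, neg_lt, neg_sub]

namespace IsEuclideanSeq

lemma antitone_signedInterval (hB : IsEuclideanSeq a B) : Antitone (signedInterval B) := by
  refine antitone_nat_of_succ_le fun k y hy => ?_
  obtain ⟨lower, upper⟩ := mem_signedInterval_succ.1 hy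
  have add_le : B (k + 1) + B (k + 2) ≤ B k := by
    have one_le : (1 : R) ≤ a (k + 1) := mod_cast hB.one_le k
    rw [hB.eq_mul_add k]
    gcongr
    exact le_mul_of_one_le_left (hB.pos _).le one_le
  exact ⟨by linarith [hB.pos (k + 2)], by linarith⟩

lemma eq_of_sub_intCast_mem_signedInterval (hB : IsEuclideanSeq a B) (hB0 : B 0 = 1) {x : R}
    {z w : ℤ} {k l : ℕ} (hz : x - z ∈ signedInterval B k)
    (hw : x - w ∈ signedInterval B l) : z = w := by
  have unit {u : ℤ} {j : ℕ} (hu : x - u ∈ signedInterval B j) :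
      x - u ∈ Set.Ioo (-B 1) (1 - B 1) := by
    simpa [mem_signedInterval, hB0] using hB.antitone_signedInterval j.zero_le hu
  obtain ⟨hz₁, hz₂⟩ := unit hz
  obtain ⟨hw₁, hw₂⟩ := unit hw
  have hzw : z < w + 1 := by exact_mod_cast (by linarith : (z : R) < w + 1)
  have hwz : w < z + 1 := by exact_mod_cast (by linarith : (w : R) < z + 1)
  lia

variable (hB : IsEuclideanSeq a B) (hd : IsOstrowskiWord a d N)

include hB hd

lemma altTail_mem_Ioo (m : ℕ) : altTail d B N m ∈ Set.Ioo (-B (m + 1)) (B m) := by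
  have of_le {j : ℕ} (hj : N ≤ j) : altTail d B N j ∈ Set.Ioo (-B (j + 1)) (B j) := by
    simpa [altTail_of_le hj] using ⟨hB.pos (j + 1), hB.pos j⟩
  rcases le_total N m with hm | hm
  · exact of_le hm
  induction hm using Nat.decreasingInduction with
  | self => exact of_le le_rfl
  | of_succ m hm ih =>
    have digit_nonneg : 0 ≤ (d m : R) * B (m + 1) := mul_nonneg (Nat.cast_nonneg _) (hB.pos _).le
    have digit_le : (d m : R) * B (m + 1) ≤ a (m + 1) * B (m + 1) :=
      mul_le_mul_of_nonneg_right (mod_cast hd.le m) (hB.pos _).le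
    rw [altTail_of_lt hm]
    exact ⟨by linarith [ih.2], by linarith [ih.1, hB.eq_mul_add m]⟩

lemma altTail_lt (m : ℕ) : altTail d B N m < d m * B (m + 1) + B (m + 2) := by
  rw [hd.altTail_eq m]
  linarith [(hB.altTail_mem_Ioo hd (m + 1)).1]

lemma altTail_lt_of_lt {m : ℕ} (hm : d m < a (m + 1)) : altTail d B N m < B m - B (m + 1) := by
  have digit_le : ((d m : R) + 1) * B (m + 1) ≤ a (m + 1) * B (m + 1) :=
    mul_le_mul_of_nonneg_right (mod_cast hm) (hB.pos _).le
  linarith [hB.altTail_lt hd m, hB.eq_mul_add m]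

lemma lt_altTail_of_ne_zero {m : ℕ} (hm : d m ≠ 0) :
    (d m - 1) * B (m + 1) + B (m + 2) < altTail d B N m := by
  rw [hd.altTail_eq m]
  linarith [hB.altTail_lt_of_lt hd (hd.lt_of_ne_zero hm)]

lemma altTail_lt_iff_le (m c : ℕ) :
    altTail d B N m < c * B (m + 1) + B (m + 2) ↔ d m ≤ c := by
  refine ⟨fun h => ?_, fun h => (hB.altTail_lt hd m).trans_le ?_⟩
  · by_contra! hlt
    have digit_le : (c : R) * B (m + 1) ≤ (d m - 1) * B (m + 1) :=
      mul_le_mul_of_nonneg_right (le_sub_iff_add_le.2 (mod_cast hlt)) (hB.pos _).le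
    linarith [hB.lt_altTail_of_ne_zero hd (Nat.ne_zero_of_lt hlt)]
  · gcongr
    exact (hB.pos _).le

lemma altTail_lt_iff_eq_zero (m : ℕ) : altTail d B N m < B (m + 2) ↔ d m = 0 := by
  simpa using hB.altTail_lt_iff_le hd m 0

lemma altTail_lt_iff_lt (m : ℕ) : altTail d B N m < B m - B (m + 1) ↔ d m < a (m + 1) := by
  obtain ⟨c, hc⟩ := Nat.exists_eq_add_of_le' (hB.one_le m)
  have bound_eq : B m - B (m + 1) = c * B (m + 1) + B (m + 2) := by
    rw [hB.eq_mul_add m, hc]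
    push_cast
    ring
  rw [bound_eq, hB.altTail_lt_iff_le hd, hc, Nat.lt_succ_iff]

lemma altTail_zero_mem_signedInterval_iff_of_eq_zero {k : ℕ} (hzero : ∀ m < k, d m = 0) :
    altTail d B N 0 ∈ signedInterval B k ↔ d k < a (k + 1) := by
  rw [mem_signedInterval, hd.neg_one_pow_mul_altTail_zero hzero, Set.mem_Ioo,
    hB.altTail_lt_iff_lt hd, and_iff_right (hB.altTail_mem_Ioo hd k).1]

lemma eq_zero_of_altTail_zero_mem_signedInterval {k : ℕ}
    (h : altTail d B N 0 ∈ signedInterval B k) : ∀ m < k, d m = 0 := by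
  induction k with
  | zero => simp
  | succ k ih =>
    have hzero := ih (hB.antitone_signedInterval k.le_succ h)
    have tail_lt : altTail d B N k < B (k + 2) := by
      rw [← hd.neg_one_pow_mul_altTail_zero hzero]
      exact (mem_signedInterval_succ.1 h).2
    exact Nat.forall_lt_succ_right.2 ⟨hzero, (hB.altTail_lt_iff_eq_zero hd k).1 tail_lt⟩

theorem altTail_zero_mem_signedInterval_iff (k : ℕ) :
    altTail d B N 0 ∈ signedInterval B k ↔ (∀ m < k, d m = 0) ∧ d k < a (k + 1) := by
  refine ⟨fun h => ?_, fun h => (hB.altTail_zero_mem_signedInterval_iff_of_eq_zero hd h.1).2 h.2⟩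
  have hzero := hB.eq_zero_of_altTail_zero_mem_signedInterval hd h
  exact ⟨hzero, (hB.altTail_zero_mem_signedInterval_iff_of_eq_zero hd hzero).1 h⟩

end IsEuclideanSeq

end AlternatingTails

section Differences

variable {α : ℝ} {a p q : ℕ → ℕ}

/-- The sequence `|β_{m-1}|`, shifted so that index `0` stands for `β_{-1} = -1`. It is defined
through the sign `(-1) ^ m` of `β_m`, so that its linear recurrence is immediate. -/
noncomputable def absBeta (α : ℝ) (p q : ℕ → ℕ) : ℕ → ℝ
  | 0 => 1
  | m + 1 => (-1) ^ m * cfBeta α p q m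

lemma cfBeta_eq_absBeta (m : ℕ) : cfBeta α p q m = (-1) ^ m * absBeta α p q (m + 1) := by
  rw [absBeta, ← mul_assoc, ← mul_pow, neg_one_mul, neg_neg, one_pow, one_mul]

lemma absBeta_eq_mul_add (hpq : IsConvergents a p q) (m : ℕ) :
    absBeta α p q m = a (m + 1) * absBeta α p q (m + 1) + absBeta α p q (m + 2) := by
  obtain ⟨hp0, hq0, hp1, hq1, hp, hq⟩ := hpq
  cases m with
  | zero =>
    simp only [absBeta, cfBeta, zero_add, hp0, hq0, hp1, hq1]
    push_cast
    ring
  | succ m =>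
    simp only [absBeta, cfBeta, hp, hq]
    push_cast
    ring

lemma absBeta_succ_eq_mul {θ : ℕ → ℝ} (h0 : θ 0 = α)
    (hθ : ∀ n, θ (n + 1) * (θ n - a n) = 1) (hpq : IsConvergents a p q) (m : ℕ) :
    absBeta α p q (m + 1) = (θ m - a m) * absBeta α p q m := by
  induction m with
  | zero => simp [absBeta, cfBeta, hpq.1, hpq.2.1, h0]
  | succ m ih =>
    linear_combination -θ (m + 1) * ih - absBeta α p q m * hθ m - absBeta_eq_mul_add hpq m

lemma irrational_completeQuotient {θ : ℕ → ℝ} (h0 : Irrational (θ 0))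
    (hθ : ∀ n, θ (n + 1) = 1 / (θ n - ⌊θ n⌋)) (n : ℕ) : Irrational (θ n) := by
  induction n with
  | zero => exact h0
  | succ n ih =>
    rw [hθ, one_div]
    exact (ih.sub_intCast _).inv

lemma IsCFExpansion.exists_completeQuotient (ha : IsCFExpansion α a) (hirr : Irrational α) :
    ∃ θ : ℕ → ℝ, θ 0 = α ∧
      ∀ n, θ n - a n ∈ Set.Ioo 0 1 ∧ θ (n + 1) * (θ n - a n) = 1 := by
  obtain ⟨θ, rfl, hθ⟩ := ha
  refine ⟨θ, rfl, fun n => ?_⟩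
  have irr : Irrational (θ n) := irrational_completeQuotient hirr (fun n => (hθ n).2) n
  have sub_eq_fract : θ n - a n = Int.fract (θ n) := by
    rw [Int.fract, ← (hθ n).1, Int.cast_natCast]
  have fract_pos : 0 < Int.fract (θ n) := Int.fract_pos.2 (irr.ne_int _)
  rw [sub_eq_fract, (hθ n).2, Int.self_sub_floor]
  exact ⟨⟨fract_pos, Int.fract_lt_one _⟩, one_div_mul_cancel fract_pos.ne'⟩

lemma IsCFExpansion.isEuclideanSeq_absBeta (ha : IsCFExpansion α a) (hirr : Irrational α)
    (hpq : IsConvergents a p q) : IsEuclideanSeq a (absBeta α p q) := by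
  obtain ⟨θ, h0, hθ⟩ := ha.exists_completeQuotient hirr
  refine ⟨fun m => ?_, absBeta_eq_mul_add hpq, fun m => ?_⟩
  · induction m with
    | zero => exact one_pos
    | succ m ih =>
      rw [absBeta_succ_eq_mul h0 (fun n => (hθ n).2) hpq]
      exact mul_pos (hθ m).1.1 ih
  · have one_lt : 1 < θ (m + 1) := by
      rw [eq_one_div_of_mul_eq_one_left (hθ m).2]
      exact one_lt_one_div (hθ m).1.1 (hθ m).1.2
    have pos : (0 : ℝ) < a (m + 1) := by linarith [(hθ (m + 1)).1.2]
    exact_mod_cast pos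

lemma IsOstrowskiWord.altTail_absBeta_zero {d : ℕ → ℕ} {N : ℕ} (hd : IsOstrowskiWord a d N) :
    altTail d (absBeta α p q) N 0 = α * (∑ᶠ k, d k * q k : ℕ) - (∑ᶠ k, d k * p k : ℕ) := by
  rw [hd.finsum_mul_eq_sum_range, hd.finsum_mul_eq_sum_range]
  push_cast
  rw [altTail, ← Finset.range_eq_Ico, Finset.mul_sum, ← Finset.sum_sub_distrib]
  refine Finset.sum_congr rfl fun k _ => ?_
  rw [zero_add, mul_right_comm, ← cfBeta_eq_absBeta, cfBeta]
  ring

lemma IsOstrowskiRep.exists_isOstrowskiWord {Z : ℕ} {d : ℕ → ℕ} (hd : IsOstrowskiRep a q Z d) :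
    ∃ N, IsOstrowskiWord a d N ∧ Z = ∑ᶠ k, d k * q k := by
  obtain ⟨lt_zero, le_succ, carry, N, eq_zero, hZ⟩ := hd
  have word : IsOstrowskiWord a d N :=
    ⟨fun | 0 => lt_zero.le | m + 1 => le_succ m, carry, eq_zero⟩
  exact ⟨N, word, hZ.trans (word.finsum_mul_eq_sum_range q).symm⟩

lemma strictlyBetween_cfBeta_iff {n : ℕ} (hpos : 0 < absBeta α p q (n + 1)) (x : ℝ) :
    StrictlyBetween x (-cfBeta α p q (n + 1)) (-cfBeta α p q n - cfBeta α p q (n + 1)) ↔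
      x ∈ signedInterval (absBeta α p q) (n + 1) := by
  rw [mem_signedInterval_succ, StrictlyBetween, cfBeta_eq_absBeta, cfBeta_eq_absBeta, pow_succ]
  rcases neg_one_pow_eq_or ℝ n with sign | sign <;> rw [sign]
  · rw [min_eq_right (by linarith), max_eq_left (by linarith), Set.mem_Ioo]
    ring_nf
  · rw [min_eq_left (by linarith), max_eq_right (by linarith), Set.mem_Ioo]
    constructor <;> rintro ⟨lower, upper⟩ <;> constructor <;> linarith

end Differences

theorem ostrowski_after_tilde_characterization_general {α : ℝ} (hirr : Irrational α)
    {a p q d : ℕ → ℕ} (ha : IsCFExpansion α a) (hpq : IsConvergents a p q) {Z : ℕ}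
    (hd : IsOstrowskiRep a q Z d) (n : ℕ) (z : ℤ) :
    StrictlyBetween (α * Z - z) (-cfBeta α p q (n + 1)) (-cfBeta α p q n - cfBeta α p q (n + 1)) ↔
      ((∀ m ≤ n, d m = 0) ∧ d (n + 1) < a (n + 2)) ∧ z = (∑ᶠ k, d k * p k : ℕ) := by
  obtain ⟨N, word, hZ⟩ := hd.exists_isOstrowskiWord
  have hB := ha.isEuclideanSeq_absBeta hirr hpq
  have tail_eq : altTail d (absBeta α p q) N 0 = α * Z - ((∑ᶠ k, d k * p k : ℕ) : ℤ) := by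
    rw [word.altTail_absBeta_zero, ← hZ, Int.cast_natCast]
  have tail_mem_iff := hB.altTail_zero_mem_signedInterval_iff word
  have tail_mem_zero := (tail_mem_iff 0).2 ⟨by simp, hd.1⟩
  simp only [strictlyBetween_cfBeta_iff (hB.pos _), ← Nat.lt_succ_iff, ← tail_mem_iff (n + 1)]
  rw [tail_eq] at tail_mem_zero ⊢
  constructor
  · intro hz
    have z_eq := hB.eq_of_sub_intCast_mem_signedInterval rfl hz tail_mem_zero
    exact ⟨z_eq ▸ hz, z_eq⟩
  · rintro ⟨tail_mem, rfl⟩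
    exact tail_mem

/-- `[q_m](Z) = 0` for all `m ≤ n` and `[q_{n+1}](Z) < a_{n+2}` iff there is
`Z' ∈ ℕ` with `α Z − Z'` strictly between `−β_{n+1}` and `−β_n − β_{n+1}`;
moreover such a `Z'` is unique. -/
theorem ostrowski_after_tilde_characterization
    (α : ℝ) (hα : 0 < α) (hirr : Irrational α)
    (a : ℕ → ℕ) (ha : IsCFExpansion α a)
    (p q : ℕ → ℕ) (hpq : IsConvergents a p q)
    (ost : ℕ → ℕ → ℕ) (host : ∀ X : ℕ, IsOstrowskiRep a q X (ost X))
    (n Z : ℕ) :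
    (((∀ m : ℕ, m ≤ n → ost Z m = 0) ∧ ost Z (n + 1) < a (n + 2)) ↔
      ∃ Z' : ℕ, StrictlyBetween (α * (Z : ℝ) - (Z' : ℝ))
        (-(cfBeta α p q (n + 1))) (-(cfBeta α p q n) - cfBeta α p q (n + 1))) ∧
    (∀ Z' Z'' : ℕ,
      StrictlyBetween (α * (Z : ℝ) - (Z' : ℝ))
        (-(cfBeta α p q (n + 1))) (-(cfBeta α p q n) - cfBeta α p q (n + 1)) →
      StrictlyBetween (α * (Z : ℝ) - (Z'' : ℝ))
        (-(cfBeta α p q (n + 1))) (-(cfBeta α p q n) - cfBeta α p q (n + 1)) →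
      Z' = Z'') := by
  have key (Z' : ℕ) := ostrowski_after_tilde_characterization_general hirr ha hpq (host Z) n Z'
  simp only [Int.cast_natCast, Nat.cast_inj] at key
  simp only [key, exists_and_left, exists_eq, and_true, true_and]
  exact fun _ _ h' h'' => h'.2.trans h''.2.symm
end

section
/- Let n ∈ ℕ and X, Z ∈ ℕ be such that [q_m](X) = 0 for all m > n, [q_m](Z) = 0 for all m ≤ n, and such that [q_{n+1}](Z) < a_{n+2} whenever [q_n](X) > 0. Then the Ostrowski digits of X + Z are obtained by concatenation: [q_m](X + Z) = [q_m](X) for all m ≤ n, and [q_m](X + Z) = [q_m](Z) for all m > n. -/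
/-- The digits `d` form a greedy expansion in the base sequence `q`: for each `m`, the digits
below `m` contribute less than `q m`. This is the property that makes expansions unique; it does
not ask that the digits be eventually zero. -/
def IsGreedyExpansion (q d : ℕ → ℕ) : Prop :=
  ∀ m : ℕ, ∑ k ∈ Finset.range m, d k * q k < q m

namespace IsGreedyExpansion

variable {q d e : ℕ → ℕ} {m N : ℕ}

lemma sum_range_succ_div (hd : IsGreedyExpansion q d) (m : ℕ) :
    (∑ k ∈ Finset.range (m + 1), d k * q k) / q m = d m := by
  rw [Finset.sum_range_succ, Nat.add_mul_div_right _ _ (Nat.zero_lt_of_lt (hd m)),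
    Nat.div_eq_of_lt (hd m), zero_add]

lemma sum_range_succ_mod (hd : IsGreedyExpansion q d) (m : ℕ) :
    (∑ k ∈ Finset.range (m + 1), d k * q k) % q m = ∑ k ∈ Finset.range m, d k * q k := by
  rw [Finset.sum_range_succ, Nat.add_mul_mod_self_right, Nat.mod_eq_of_lt (hd m)]

lemma sum_range_eq_of_le (hd : IsGreedyExpansion q d) (he : IsGreedyExpansion q e) (hmN : m ≤ N)
    (h : ∑ k ∈ Finset.range N, d k * q k = ∑ k ∈ Finset.range N, e k * q k) :
    ∑ k ∈ Finset.range m, d k * q k = ∑ k ∈ Finset.range m, e k * q k := by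
  induction hmN using Nat.decreasingInduction with
  | self => exact h
  | of_succ k _ ih => rw [← hd.sum_range_succ_mod, ih, he.sum_range_succ_mod]

lemma digit_eq_of_sum_range_eq (hd : IsGreedyExpansion q d) (he : IsGreedyExpansion q e)
    (hmN : m < N) (h : ∑ k ∈ Finset.range N, d k * q k = ∑ k ∈ Finset.range N, e k * q k) :
    d m = e m := by
  rw [← hd.sum_range_succ_div, hd.sum_range_eq_of_le he hmN h, he.sum_range_succ_div]

end IsGreedyExpansion

/-- `q` is the sequence of convergent denominators of the continued fraction with partial quotients
`a`; this is the part of `IsConvergents` that does not involve the numerators. -/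
structure IsConvergentDenominators (a q : ℕ → ℕ) : Prop where
  zero : q 0 = 1
  one : q 1 = a 1
  add_two : ∀ n : ℕ, q (n + 2) = a (n + 2) * q (n + 1) + q n

lemma IsConvergents.denominators {a p q : ℕ → ℕ} (h : IsConvergents a p q) :
    IsConvergentDenominators a q :=
  let ⟨_, zero, _, one, _, add_two⟩ := h
  ⟨zero, one, add_two⟩

/-- The Ostrowski digit conditions on `d` with respect to the partial quotients `a`, indexed as in
`IsOstrowskiRep`; the digits need not be eventually zero. -/
structure IsOstrowskiAdmissible (a d : ℕ → ℕ) : Prop where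
  zero_lt : d 0 < a 1
  succ_le : ∀ n : ℕ, d (n + 1) ≤ a (n + 2)
  eq_zero_of_succ_eq : ∀ n : ℕ, d (n + 1) = a (n + 2) → d n = 0

namespace IsOstrowskiAdmissible

variable {a q d e : ℕ → ℕ} {n : ℕ}

lemma isGreedyExpansion (hq : IsConvergentDenominators a q) (hd : IsOstrowskiAdmissible a d) :
    IsGreedyExpansion q d := by
  intro m
  induction m using Nat.twoStepInduction with
  | zero => simp [hq.zero]
  | one => simpa [hq.zero, hq.one] using hd.zero_lt
  | more m ih ih_succ =>
    rw [Finset.sum_range_succ, hq.add_two]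
    rcases (hd.succ_le m).eq_or_lt with hmax | hlt
    · have hdrop : ∑ k ∈ Finset.range (m + 1), d k * q k = ∑ k ∈ Finset.range m, d k * q k := by
        rw [Finset.sum_range_succ, hd.eq_zero_of_succ_eq m hmax, zero_mul, add_zero]
      rw [hdrop, hmax, add_comm]
      exact Nat.add_lt_add_left ih _
    · calc ∑ k ∈ Finset.range (m + 1), d k * q k + d (m + 1) * q (m + 1)
        _ < q (m + 1) + d (m + 1) * q (m + 1) := Nat.add_lt_add_right ih_succ _
        _ = (d (m + 1) + 1) * q (m + 1) := by ring
        _ ≤ a (m + 2) * q (m + 1) := Nat.mul_le_mul_right _ hlt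
        _ ≤ a (m + 2) * q (m + 1) + q m := Nat.le_add_right _ _

lemma add (hd : IsOstrowskiAdmissible a d) (he : IsOstrowskiAdmissible a e)
    (hd_high : ∀ m : ℕ, n < m → d m = 0) (he_low : ∀ m : ℕ, m ≤ n → e m = 0)
    (hcomp : 0 < d n → e (n + 1) < a (n + 2)) :
    IsOstrowskiAdmissible a (d + e) := by
  have low : ∀ m, m ≤ n → (d + e) m = d m := fun m hm => by simp [he_low m hm]
  have high : ∀ m, n < m → (d + e) m = e m := fun m hm => by simp [hd_high m hm]
  refine ⟨?_, fun m => ?_, fun m hmax => ?_⟩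
  · rw [low 0 n.zero_le]
    exact hd.zero_lt
  · rcases le_or_gt (m + 1) n with hm | hm
    · rw [low _ hm]
      exact hd.succ_le m
    · rw [high _ hm]
      exact he.succ_le m
  · rcases lt_trichotomy m n with hm | rfl | hm
    · rw [low _ hm] at hmax
      rw [low m hm.le, hd.eq_zero_of_succ_eq m hmax]
    · rw [high _ m.lt_succ_self] at hmax
      rw [low m le_rfl]
      exact Nat.eq_zero_of_not_pos fun hpos => (hcomp hpos).ne hmax
    · rw [high _ (hm.trans m.lt_succ_self)] at hmax
      rw [high m hm, he.eq_zero_of_succ_eq m hmax]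

end IsOstrowskiAdmissible

namespace IsOstrowskiRep

open Filter

variable {a q d e : ℕ → ℕ} {X Z : ℕ}

lemma isOstrowskiAdmissible (hd : IsOstrowskiRep a q X d) : IsOstrowskiAdmissible a d :=
  let ⟨zero_lt, succ_le, eq_zero_of_succ_eq, _⟩ := hd
  ⟨zero_lt, succ_le, eq_zero_of_succ_eq⟩

lemma eventually_eq_zero (hd : IsOstrowskiRep a q X d) : ∀ᶠ k in atTop, d k = 0 :=
  let ⟨_, _, _, N, hzero, _⟩ := hd
  eventually_atTop.2 ⟨N, hzero⟩

lemma eventually_sum_range_eq (hd : IsOstrowskiRep a q X d) :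
    ∀ᶠ M in atTop, ∑ k ∈ Finset.range M, d k * q k = X := by
  obtain ⟨-, -, -, N, hzero, rfl⟩ := hd
  filter_upwards [eventually_ge_atTop N] with M hNM
  exact Finset.eventually_constant_sum (fun k hk => by rw [hzero k hk, zero_mul]) hNM

theorem unique (hq : IsConvergentDenominators a q) (hd : IsOstrowskiRep a q X d)
    (he : IsOstrowskiRep a q X e) : d = e := by
  funext m
  obtain ⟨N, hdN, heN, hmN⟩ := (hd.eventually_sum_range_eq.and
    (he.eventually_sum_range_eq.and (eventually_gt_atTop m))).exists
  exact (hd.isOstrowskiAdmissible.isGreedyExpansion hq).digit_eq_of_sum_range_eq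
    (he.isOstrowskiAdmissible.isGreedyExpansion hq) hmN (hdN.trans heN.symm)

lemma add (hd : IsOstrowskiRep a q X d) (he : IsOstrowskiRep a q Z e)
    (hadm : IsOstrowskiAdmissible a (d + e)) : IsOstrowskiRep a q (X + Z) (d + e) := by
  have hzero : ∀ᶠ k in atTop, (d + e) k = 0 := by
    filter_upwards [hd.eventually_eq_zero, he.eventually_eq_zero] with k hdk hek
    rw [Pi.add_apply, hdk, hek]
  have hsum : ∀ᶠ M in atTop, X + Z = ∑ k ∈ Finset.range M, (d + e) k * q k := by
    filter_upwards [hd.eventually_sum_range_eq, he.eventually_sum_range_eq] with M hdM heM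
    simp only [Pi.add_apply, add_mul, Finset.sum_add_distrib, hdM, heM]
  obtain ⟨N, hzeroN, hsumN⟩ := ((eventually_forall_ge_atTop.2 hzero).and hsum).exists
  exact ⟨hadm.zero_lt, hadm.succ_le, hadm.eq_zero_of_succ_eq, N, hzeroN, hsumN⟩

end IsOstrowskiRep

theorem ostrowski_concat_general {a q : ℕ → ℕ} (hq : IsConvergentDenominators a q)
    {n X Z : ℕ} {d e f : ℕ → ℕ} (hd : IsOstrowskiRep a q X d) (he : IsOstrowskiRep a q Z e)
    (hf : IsOstrowskiRep a q (X + Z) f)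
    (hd_high : ∀ m : ℕ, n < m → d m = 0) (he_low : ∀ m : ℕ, m ≤ n → e m = 0)
    (hcomp : 0 < d n → e (n + 1) < a (n + 2)) :
    (∀ m : ℕ, m ≤ n → f m = d m) ∧ (∀ m : ℕ, n < m → f m = e m) := by
  have hadm : IsOstrowskiAdmissible a (d + e) :=
    hd.isOstrowskiAdmissible.add he.isOstrowskiAdmissible hd_high he_low hcomp
  obtain rfl : f = d + e := hf.unique hq (hd.add he hadm)
  exact ⟨fun m hm => by simp [he_low m hm], fun m hm => by simp [hd_high m hm]⟩

/-- Concatenation of Ostrowski representations: if all digits of `X` above `n`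
vanish, all digits of `Z` up to `n` vanish, and `[q_{n+1}](Z) < a_{n+2}`
whenever `[q_n](X) > 0`, then the digits of `X + Z` are those of `X` up to `n`
and those of `Z` above `n`. -/
theorem ostrowski_concat
    (α : ℝ) (hα : 0 < α) (hirr : Irrational α)
    (a : ℕ → ℕ) (ha : IsCFExpansion α a)
    (p q : ℕ → ℕ) (hpq : IsConvergents a p q)
    (ost : ℕ → ℕ → ℕ) (host : ∀ X : ℕ, IsOstrowskiRep a q X (ost X))
    (n X Z : ℕ)
    (hX : ∀ m : ℕ, n < m → ost X m = 0)
    (hZ : ∀ m : ℕ, m ≤ n → ost Z m = 0)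
    (hcomp : 0 < ost X n → ost Z (n + 1) < a (n + 2)) :
    (∀ m : ℕ, m ≤ n → ost (X + Z) m = ost X m) ∧
    (∀ m : ℕ, n < m → ost (X + Z) m = ost Z m) :=
  ostrowski_concat_general hpq.denominators (host X) (host Z) (host (X + Z)) hX hZ hcomp
end

section
/- Let X, Y ∈ ℕ with X ≠ Y, and let N be the largest index n with [q_n](X) ≠ [q_n](Y). Then X < Y if and only if [q_N](X) < [q_N](Y). (Comparison of natural numbers is determined by the most significant differing Ostrowski digit.) -/
/-!
The digits below position `n` never add up to one unit of `q n`: when the digit at `n + 1` is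
maximal, the digit at `n` vanishes, and `q (n + 2) = a (n + 2) * q (n + 1) + q n` leaves exactly
`q n` of room for the remaining ones. Hence the deficit of at least `q N` at the most significant
differing position cannot be made up by the lower digits, while the digits above it cancel.
-/

open Filter Finset

theorem sum_range_nsmul_lt_of_digit_lt {M : Type*} [AddCommMonoid M] [PartialOrder M]
    [IsOrderedCancelAddMonoid M] {w : ℕ → M} (hw : ∀ i, 0 ≤ w i) {d e : ℕ → ℕ} {N m : ℕ}
    (hprefix : ∑ i ∈ range N, d i • w i < w N) (hlt : d N < e N)
    (hmax : ∀ n, N < n → d n = e n) (hm : N < m) :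
    ∑ i ∈ range m, d i • w i < ∑ i ∈ range m, e i • w i := by
  have hlow : ∑ i ∈ range (N + 1), d i • w i < ∑ i ∈ range (N + 1), e i • w i :=
    calc
      ∑ i ∈ range (N + 1), d i • w i = ∑ i ∈ range N, d i • w i + d N • w N := sum_range_succ _ N
      _ < w N + d N • w N := by gcongr
      _ = (d N + 1) • w N := (succ_nsmul' _ _).symm
      _ ≤ e N • w N := nsmul_le_nsmul_left (hw N) hlt
      _ ≤ ∑ i ∈ range (N + 1), e i • w i :=
        single_le_sum (f := fun i ↦ e i • w i) (fun i _ ↦ nsmul_nonneg (hw i) _)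
          (self_mem_range_succ N)
  have hhigh : ∑ i ∈ Ico (N + 1) m, d i • w i = ∑ i ∈ Ico (N + 1) m, e i • w i :=
    sum_congr rfl fun i hi ↦ by rw [hmax i (mem_Ico.mp hi).1]
  rw [← sum_range_add_sum_Ico _ hm, ← sum_range_add_sum_Ico _ hm, hhigh]
  gcongr

namespace IsOstrowskiRep

variable {a p q d e : ℕ → ℕ} {X Y N : ℕ}

theorem sum_range_lt (hd : IsOstrowskiRep a q X d) (hpq : IsConvergents a p q) (n : ℕ) :
    ∑ i ∈ range n, d i * q i < q n := by
  obtain ⟨-, hq0, -, hq1, -, hq⟩ := hpq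
  obtain ⟨hd0, hle, hcarry, -⟩ := hd
  induction n using Nat.twoStepInduction with
  | zero => simp [hq0]
  | one => simpa [hq0, hq1] using hd0
  | more n ih ih' =>
    rcases (hle n).eq_or_lt with hfull | hroom
    · calc
        ∑ i ∈ range (n + 2), d i * q i
            = ∑ i ∈ range n, d i * q i + a (n + 2) * q (n + 1) := by
          rw [sum_range_succ, sum_range_succ, hcarry n hfull, hfull, zero_mul, add_zero]
        _ < q n + a (n + 2) * q (n + 1) := by gcongr
        _ = q (n + 2) := by rw [hq, add_comm]
    · calc
        ∑ i ∈ range (n + 2), d i * q i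
            = ∑ i ∈ range (n + 1), d i * q i + d (n + 1) * q (n + 1) := sum_range_succ _ _
        _ < q (n + 1) + d (n + 1) * q (n + 1) := by gcongr
        _ = (d (n + 1) + 1) * q (n + 1) := by ring
        _ ≤ a (n + 2) * q (n + 1) := Nat.mul_le_mul_right _ hroom
        _ ≤ q (n + 2) := by rw [hq]; exact Nat.le_add_right _ _

theorem eventually_eq_sum_range (hd : IsOstrowskiRep a q X d) :
    ∀ᶠ m in atTop, X = ∑ i ∈ range m, d i * q i := by
  obtain ⟨-, -, -, K, hzero, hX⟩ := hd
  filter_upwards [eventually_ge_atTop K] with m hm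
  rw [hX, eventually_constant_sum (fun n hn ↦ by rw [hzero n hn, zero_mul]) hm]

theorem lt_of_digit_lt (hd : IsOstrowskiRep a q X d) (he : IsOstrowskiRep a q Y e)
    (hpq : IsConvergents a p q) (hlt : d N < e N) (hmax : ∀ n, N < n → d n = e n) : X < Y := by
  obtain ⟨m, hX, hY, hm⟩ := (hd.eventually_eq_sum_range.and
    (he.eventually_eq_sum_range.and (eventually_gt_atTop N))).exists
  rw [hX, hY]
  exact sum_range_nsmul_lt_of_digit_lt (fun i ↦ Nat.zero_le (q i)) (hd.sum_range_lt hpq N)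
    hlt hmax hm

end IsOstrowskiRep

theorem ostrowski_lt_iff_msd_general {a p q : ℕ → ℕ} (hpq : IsConvergents a p q)
    {X Y N : ℕ} {d e : ℕ → ℕ} (hd : IsOstrowskiRep a q X d) (he : IsOstrowskiRep a q Y e)
    (hdiff : d N ≠ e N) (hmax : ∀ n, N < n → d n = e n) : X < Y ↔ d N < e N := by
  refine ⟨fun hXY ↦ ?_, fun hlt ↦ hd.lt_of_digit_lt he hpq hlt hmax⟩
  refine hdiff.lt_or_gt.resolve_right fun hgt ↦ hXY.asymm ?_
  exact he.lt_of_digit_lt hd hpq hgt fun n hn ↦ (hmax n hn).symm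

/-- Comparison is determined by the most significant differing Ostrowski digit:
if `N` is the largest index at which the digits of `X` and `Y` differ, then
`X < Y` iff `[q_N](X) < [q_N](Y)`. -/
theorem ostrowski_lt_iff_msd
    (α : ℝ) (hα : 0 < α) (hirr : Irrational α)
    (a : ℕ → ℕ) (ha : IsCFExpansion α a)
    (p q : ℕ → ℕ) (hpq : IsConvergents a p q)
    (ost : ℕ → ℕ → ℕ) (host : ∀ X : ℕ, IsOstrowskiRep a q X (ost X))
    (X Y N : ℕ) (hXY : X ≠ Y)
    (hdiff : ost X N ≠ ost Y N)
    (hmax : ∀ n : ℕ, N < n → ost X n = ost Y n) :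
    X < Y ↔ ost X N < ost Y N :=
  ostrowski_lt_iff_msd_general hpq (host X) (host Y) hdiff hmax
end

section
/- Let X1, X2, Y1, Y2 ∈ ℕ. If |f_α(X1) − f_β(X2)| = |f_α(Y1) − f_β(Y2)|, then X1 = Y1 and X2 = Y2. -/
theorem linearIndependent_rat_one_pair_iff {K : Type*} [DivisionRing K] [CharZero K] {a b : K} :
    LinearIndependent ℚ ![1, a, b] ↔
      ∀ u v w : ℚ, (u : K) + v * a + w * b = 0 → u = 0 ∧ v = 0 ∧ w = 0 := by
  simp only [Fintype.linearIndependent_iff, Fin.sum_univ_three, Fin.forall_fin_succ]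
  simp [Fin.forall_fin_succ_pi, Rat.smul_def]

theorem linearIndependent_coe_addCircle_of_vecCons {G : Type*} [AddCommGroup G] {n : ℕ} {p : G}
    {v : Fin n → G} (h : LinearIndependent ℤ (Matrix.vecCons p v)) :
    LinearIndependent ℤ (((↑) : G → AddCircle p) ∘ v) := by
  refine Fintype.linearIndependent_iff.mpr fun c hc i ↦ ?_
  have hsum : ((∑ i, c i • v i : G) : AddCircle p) = 0 := by
    simpa [QuotientAddGroup.mk_sum] using hc
  obtain ⟨m, hm⟩ := (AddCircle.coe_eq_zero_iff p).mp hsum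
  have hrel : ∑ i, Matrix.vecCons (-m) c i • Matrix.vecCons p v i = 0 := by
    simp [Fin.sum_univ_succ, hm]
  simpa using Fintype.linearIndependent_iff.mp h _ hrel i.succ

theorem IsFracPart.coe_eq_nsmul {γ : ℝ} {f : ℕ → ℝ} (hf : IsFracPart γ f) (X : ℕ) :
    (f X : UnitAddCircle) = X • (γ : UnitAddCircle) := by
  obtain ⟨-, U, hU⟩ := hf X
  rw [← AddCircle.coe_nsmul, eq_comm, ← sub_eq_zero, ← AddCircle.coe_sub,
    AddCircle.coe_eq_zero_iff]
  exact ⟨U, by simp [mul_comm, ← hU]⟩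

theorem fracPart_abs_diff_injective_general {G : Type*} [AddCommGroup G] [LinearOrder G]
    {L : AddSubgroup G} {α β : G} (hind : LinearIndependent ℤ ![(α : G ⧸ L), (β : G ⧸ L)])
    {f g : ℕ → G} (hf : ∀ X : ℕ, (f X : G ⧸ L) = X • (α : G ⧸ L))
    (hg : ∀ X : ℕ, (g X : G ⧸ L) = X • (β : G ⧸ L)) {X1 X2 Y1 Y2 : ℕ}
    (h : |f X1 - g X2| = |f Y1 - g Y2|) :
    X1 = Y1 ∧ X2 = Y2 := by
  have coe_diff (X Y : ℕ) :
      ((f X - g Y : G) : G ⧸ L) = (X : ℤ) • (α : G ⧸ L) + (-Y : ℤ) • (β : G ⧸ L) := by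
    rw [QuotientAddGroup.mk_sub, hf, hg, neg_smul, natCast_zsmul, natCast_zsmul, sub_eq_add_neg]
  rcases abs_eq_abs.mp h with hpos | hneg
  · have hcomb := congrArg ((↑) : G → G ⧸ L) hpos
    rw [coe_diff, coe_diff] at hcomb
    obtain ⟨hX, hY⟩ := hind.eq_of_pair hcomb
    omega
  · have hcomb := congrArg ((↑) : G → G ⧸ L) hneg
    rw [QuotientAddGroup.mk_neg, coe_diff, coe_diff, neg_add, ← neg_smul, ← neg_smul] at hcomb
    obtain ⟨hX, hY⟩ := hind.eq_of_pair hcomb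
    omega

/-- If `1, α, β` are `ℚ`-linearly independent then
`|f_α X1 − f_β X2| = |f_α Y1 − f_β Y2|` implies `X1 = Y1` and `X2 = Y2`. -/
theorem fracPart_abs_diff_injective
    (α β : ℝ) (hα : 0 < α) (hβ : 0 < β)
    (hirrα : Irrational α) (hirrβ : Irrational β)
    (hind : ∀ u v w : ℚ, (u : ℝ) + (v : ℝ) * α + (w : ℝ) * β = 0 →
      u = 0 ∧ v = 0 ∧ w = 0)
    (fα : ℕ → ℝ) (hfα : IsFracPart α fα)
    (fβ : ℕ → ℝ) (hfβ : IsFracPart β fβ)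
    (X1 X2 Y1 Y2 : ℕ)
    (h : |fα X1 - fβ X2| = |fα Y1 - fβ Y2|) :
    X1 = Y1 ∧ X2 = Y2 := by
  have hindℤ : LinearIndependent ℤ ![1, α, β] :=
    (linearIndependent_rat_one_pair_iff.mpr hind).restrict_scalars' ℤ
  have hcircle : LinearIndependent ℤ ![(α : UnitAddCircle), (β : UnitAddCircle)] := by
    simpa only [← FinVec.map_eq] using! linearIndependent_coe_addCircle_of_vecCons hindℤ
  exact fracPart_abs_diff_injective_general hcircle hfα.coe_eq_nsmul hfβ.coe_eq_nsmul h
end
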